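/- arXiv:2312.14420 — 2 statements merged into one kernel-verified Lean document; each statement's English description precedes it below -/
import Mathlib

section
/- Let (Ω, F, P) be a probability space with an increasing filtration F₀ ⊆ F₁ ⊆ … ⊆ F_n ⊆ F, and let (X_k)_{k=1}^n be a complex-valued martingale difference sequence with respect to this filtration, i.e., X_k is F_k-measurable and E[X_k | F_{k−1}] = 0 for each k; assume E|X_k|^q < ∞ for all k. Then for every q > 1 there exists a constant K_q depending only on q such that E|∑_{k=1}^n X_k|^q ≤ K_q { E( ∑_{k=1}^n E[|X_k|² | F_{k−1}] )^{q/2} + ∑_{k=1}^n E|X_k|^q }. -/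
open MeasureTheory ProbabilityTheory Filter
open scoped BigOperators

/-- size bound: products of powers are dominated by sum of powers -/
lemma rpow_mul_le_add {a b s t q : ℝ} (ha : 0 ≤ a) (hb : 0 ≤ b) (hs : 0 ≤ s) (ht : 0 ≤ t)
    (hq : 0 < q) (hst : s + t = q) : a ^ s * b ^ t ≤ a ^ q + b ^ q := by
  rcases le_total a b with h | h
  · have : a ^ s * b ^ t ≤ b ^ s * b ^ t := by gcongr
    rw [← Real.rpow_add' hb (by rw [hst]; exact hq.ne'), hst] at this
    have := Real.rpow_nonneg ha q
    linarith
  · have : a ^ s * b ^ t ≤ a ^ s * a ^ t := by gcongr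
    rw [← Real.rpow_add' ha (by rw [hst]; exact hq.ne'), hst] at this
    have := Real.rpow_nonneg hb q
    linarith

lemma norm_sq_rpow (a : ℂ) (q : ℝ) : (‖a‖ ^ 2) ^ (q / 2) = ‖a‖ ^ q := by
  rw [← Real.rpow_natCast, ← Real.rpow_mul (norm_nonneg a)]
  congr 1; push_cast; ring

lemma norm_add_sq_factor (a b : ℂ) (ha : a ≠ 0) :
    ‖a + b‖ ^ 2 = ‖a‖ ^ 2 * (1 + (2 * inner ℝ a b + ‖b‖ ^ 2) / ‖a‖ ^ 2) := by
  have : ‖a‖ ≠ 0 := norm_ne_zero_iff.2 ha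
  rw [norm_add_sq_real]
  field_simp
  ring

/-- case where `b` is big -/
lemma big_case (q : ℝ) (hq : 1 < q) (a b : ℂ) (h : ‖a‖ ≤ 2 * ‖b‖) :
    ‖a + b‖ ^ q ≤ ‖a‖ ^ q + q * (‖a‖ ^ (q - 2) * inner ℝ a b) + (3 ^ q + q * 2 ^ (q - 1)) * ‖b‖ ^ q := by
  have h1 : ‖a + b‖ ^ q ≤ 3 ^ q * ‖b‖ ^ q := by
    rw [← Real.mul_rpow (by norm_num) (norm_nonneg b)]
    apply Real.rpow_le_rpow (norm_nonneg _) _ (by linarith)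
    linarith [norm_add_le a b]
  have h0 := Real.rpow_nonneg (norm_nonneg a) q
  have h2 : -(‖a‖ ^ (q - 2) * inner ℝ a b) ≤ 2 ^ (q - 1) * ‖b‖ ^ q := by
    rcases eq_or_ne a 0 with rfl | ha
    · simp; positivity
    have hap : 0 < ‖a‖ := norm_pos_iff.2 ha
    have hin : -inner ℝ a b ≤ ‖a‖ * ‖b‖ := by
      have := abs_real_inner_le_norm a b
      linarith [neg_abs_le (inner ℝ a b)]
    rcases eq_or_ne b 0 with rfl | hb
    · simp at h; exact absurd h ha
    have hbp : 0 < ‖b‖ := norm_pos_iff.2 hb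
    calc -(‖a‖ ^ (q - 2) * inner ℝ a b) = ‖a‖ ^ (q - 2) * (- inner ℝ a b) := by ring
      _ ≤ ‖a‖ ^ (q - 2) * (‖a‖ * ‖b‖) := by gcongr
      _ = ‖a‖ ^ (q - 1) * ‖b‖ := by
        rw [← mul_assoc]; congr 1
        rw [← Real.rpow_add_one hap.ne']; congr 1; ring
      _ ≤ (2 * ‖b‖) ^ (q - 1) * ‖b‖ := by
        gcongr
      _ = 2 ^ (q - 1) * ‖b‖ ^ q := by
        rw [Real.mul_rpow (by norm_num) hbp.le, mul_assoc, ← Real.rpow_add_one hbp.ne']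
        congr 2; ring
  nlinarith

lemma pointwise_small (q : ℝ) (hq : 1 < q) (hq2 : q ≤ 2) (a b : ℂ) :
    ‖a + b‖ ^ q ≤ ‖a‖ ^ q + q * (‖a‖ ^ (q - 2) * inner ℝ a b) + (3 ^ q + q * 2 ^ (q - 1)) * ‖b‖ ^ q := by
  rcases le_total ‖a‖ (2 * ‖b‖) with h | h
  · exact big_case q hq a b h
  rcases eq_or_ne a 0 with rfl | ha
  · apply big_case q hq _ _; simp
  rcases eq_or_ne b 0 with rfl | hb
  · simp [Real.zero_rpow (by linarith : q ≠ 0)]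
  have hap : 0 < ‖a‖ := norm_pos_iff.2 ha
  have hbp : 0 < ‖b‖ := norm_pos_iff.2 hb
  set t := (2 * inner ℝ a b + ‖b‖ ^ 2) / ‖a‖ ^ 2 with ht
  have hf := norm_add_sq_factor a b ha
  rw [← ht] at hf
  have ht1 : 0 ≤ 1 + t := by
    by_contra hc
    push Not at hc
    have := mul_neg_of_pos_of_neg (pow_pos hap 2) hc
    have := sq_nonneg ‖a + b‖
    linarith
  have hB := rpow_one_add_le_one_add_mul_self (s := t) (p := q / 2) (by linarith) (by linarith) (by linarith)
  have e1 : ‖a + b‖ ^ q = ‖a‖ ^ q * (1 + t) ^ (q / 2) := by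
    rw [← norm_sq_rpow, hf, Real.mul_rpow (by positivity) ht1, norm_sq_rpow]
  have e2 : ‖a‖ ^ q * t = ‖a‖ ^ (q - 2) * (2 * inner ℝ a b + ‖b‖ ^ 2) := by
    rw [ht, Real.rpow_sub hap]
    norm_num
    field_simp
  have e3 : ‖a‖ ^ (q - 2) * ‖b‖ ^ 2 ≤ ‖b‖ ^ q := by
    have : ‖a‖ ^ (q - 2) ≤ ‖b‖ ^ (q - 2) := Real.rpow_le_rpow_of_nonpos hbp (by linarith) (by linarith)
    calc _ ≤ ‖b‖ ^ (q - 2) * ‖b‖ ^ 2 := by gcongr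
      _ = ‖b‖ ^ q := by rw [← Real.rpow_add_natCast hbp.ne']; congr 1; push_cast; ring
  have h3 : (1:ℝ) ≤ 3 ^ q := Real.one_le_rpow (by norm_num) (by linarith)
  have h4 : (0:ℝ) ≤ q * 2 ^ (q - 1) := by positivity
  have h5 : 0 ≤ ‖b‖ ^ q := by positivity
  calc ‖a + b‖ ^ q ≤ ‖a‖ ^ q * (1 + q / 2 * t) := by rw [e1]; gcongr
    _ = ‖a‖ ^ q + q / 2 * (‖a‖ ^ q * t) := by ring
    _ = ‖a‖ ^ q + q * (‖a‖ ^ (q - 2) * inner ℝ a b) + q / 2 * (‖a‖ ^ (q - 2) * ‖b‖ ^ 2) := by rw [e2]; ring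
    _ ≤ _ := by nlinarith

lemma exp_quad (x c : ℝ) (hx : |x| ≤ c) : Real.exp x ≤ 1 + x + x ^ 2 * Real.exp c := by
  have hc : 0 ≤ c := (abs_nonneg x).trans hx
  have h1 : Real.exp x * (1 - x) ≤ 1 := by
    have := Real.add_one_le_exp (-x)
    have h := Real.exp_pos x
    have : Real.exp x * (1 - x) ≤ Real.exp x * Real.exp (-x) := by gcongr; linarith
    rwa [← Real.exp_add, add_neg_cancel, Real.exp_zero] at this
  have h2 : Real.exp x ≤ Real.exp c := Real.exp_le_exp.2 ((le_abs_self x).trans hx)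
  have h3 : 1 ≤ Real.exp c := Real.one_le_exp hc
  have h4 := Real.add_one_le_exp x
  rcases le_total 0 x with h | h
  · have : x * (Real.exp x - 1) ≤ x * (x * Real.exp c) := by
      gcongr; nlinarith
    nlinarith
  · nlinarith [mul_nonneg (neg_nonneg.2 h) (by linarith : 0 ≤ Real.exp x - 1 - x), mul_nonneg (sq_nonneg x) (by linarith : 0 ≤ Real.exp c - 1)]

lemma pointwise_big (q : ℝ) (hq : 2 ≤ q) : ∃ C : ℝ, 0 < C ∧ ∀ (a b : ℂ),
    ‖a + b‖ ^ q ≤ ‖a‖ ^ q + q * (‖a‖ ^ (q - 2) * inner ℝ a b) +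
      C * (‖a‖ ^ (q - 2) * ‖b‖ ^ 2 + ‖b‖ ^ q) := by
  set C1 : ℝ := (q / 2) ^ 2 * Real.exp (q / 2 * (5 / 4)) with hC1
  have hC1p : 0 < C1 := by positivity
  set C2 : ℝ := 3 ^ q + q * 2 ^ (q - 1)
  have hC2p : 0 < C2 := by positivity
  refine ⟨C2 + q / 2 + 25 / 4 * C1, by positivity, fun a b => ?_⟩
  have n1 : 0 ≤ ‖a‖ ^ (q - 2) * ‖b‖ ^ 2 := by positivity
  have n2 : 0 ≤ ‖b‖ ^ q := by positivity
  by_cases hc : ‖a‖ ≤ 2 * ‖b‖ ∨ a = 0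
  · have h : ‖a‖ ≤ 2 * ‖b‖ := by
      rcases hc with h | rfl
      · exact h
      · simp
    have := big_case q (by linarith) a b h
    have : C2 * ‖b‖ ^ q ≤ (C2 + q / 2 + 25 / 4 * C1) * (‖a‖ ^ (q - 2) * ‖b‖ ^ 2 + ‖b‖ ^ q) := by
      gcongr
      · linarith
      · linarith
    linarith
  push Not at hc
  obtain ⟨h, ha⟩ := hc
  have hap : 0 < ‖a‖ := norm_pos_iff.2 ha
  set t := (2 * inner ℝ a b + ‖b‖ ^ 2) / ‖a‖ ^ 2 with ht
  have hf := norm_add_sq_factor a b ha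
  rw [← ht] at hf
  have ht1 : 0 ≤ 1 + t := by
    by_contra hc
    push Not at hc
    have := mul_neg_of_pos_of_neg (pow_pos hap 2) hc
    have := sq_nonneg ‖a + b‖
    linarith
  have hin := abs_le.1 (abs_real_inner_le_norm a b)
  have hnum : |2 * inner ℝ a b + ‖b‖ ^ 2| ≤ 5 / 2 * (‖a‖ * ‖b‖) := by
    rw [abs_le]; constructor <;> nlinarith [norm_nonneg b]
  have htabs : |t| ≤ 5 / 2 * (‖b‖ / ‖a‖) := by
    rw [ht, abs_div, abs_of_pos (pow_pos hap 2), div_le_iff₀ (pow_pos hap 2)]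
    refine hnum.trans_eq ?_
    field_simp
  have hba : ‖b‖ / ‖a‖ ≤ 1 / 2 := by rw [div_le_iff₀ hap]; linarith
  have hB : (1 + t) ^ (q / 2) ≤ 1 + q / 2 * t + C1 * t ^ 2 := by
    have h1 : (1 + t) ^ (q / 2) ≤ Real.exp (q / 2 * t) := by
      rw [mul_comm, Real.exp_mul]
      apply Real.rpow_le_rpow ht1 _ (by linarith)
      linarith [Real.add_one_le_exp t]
    have h2 := exp_quad (q / 2 * t) (q / 2 * (5 / 4)) (by
      rw [abs_mul, abs_of_pos (by linarith : 0 < q / 2)]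
      gcongr; linarith)
    refine h1.trans (h2.trans_eq ?_)
    rw [hC1]; ring
  have e1 : ‖a + b‖ ^ q = ‖a‖ ^ q * (1 + t) ^ (q / 2) := by
    rw [← norm_sq_rpow, hf, Real.mul_rpow (by positivity) ht1, norm_sq_rpow]
  have e0 : ‖a‖ ^ q = ‖a‖ ^ (q - 2) * ‖a‖ ^ 2 := by
    rw [← Real.rpow_add_natCast hap.ne']; congr 1; push_cast; ring
  have e2 : ‖a‖ ^ q * t = ‖a‖ ^ (q - 2) * (2 * inner ℝ a b + ‖b‖ ^ 2) := by
    rw [ht, e0]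
    field_simp
  have e3 : ‖a‖ ^ q * t ^ 2 ≤ 25 / 4 * (‖a‖ ^ (q - 2) * ‖b‖ ^ 2) := by
    have : t ^ 2 ≤ (5 / 2 * (‖b‖ / ‖a‖)) ^ 2 := by
      rw [← sq_abs t]; gcongr
    calc _ ≤ ‖a‖ ^ q * (5 / 2 * (‖b‖ / ‖a‖)) ^ 2 := by gcongr
      _ = _ := by rw [e0]; field_simp; ring
  calc ‖a + b‖ ^ q ≤ ‖a‖ ^ q * (1 + q / 2 * t + C1 * t ^ 2) := by rw [e1]; gcongr
    _ = ‖a‖ ^ q + q / 2 * (‖a‖ ^ q * t) + C1 * (‖a‖ ^ q * t ^ 2) := by ring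
    _ ≤ ‖a‖ ^ q + q / 2 * (‖a‖ ^ q * t) + C1 * (25 / 4 * (‖a‖ ^ (q - 2) * ‖b‖ ^ 2)) := by gcongr
    _ = ‖a‖ ^ q + q * (‖a‖ ^ (q - 2) * inner ℝ a b) + (q / 2 + 25 / 4 * C1) * (‖a‖ ^ (q - 2) * ‖b‖ ^ 2) := by rw [e2]; ring
    _ ≤ _ := by
      have : (q / 2 + 25 / 4 * C1) * (‖a‖ ^ (q - 2) * ‖b‖ ^ 2) ≤ (C2 + q / 2 + 25 / 4 * C1) * (‖a‖ ^ (q - 2) * ‖b‖ ^ 2 + ‖b‖ ^ q) := by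
        gcongr
        · linarith
        · linarith
      linarith

/-- Young type inequality -/
lemma young_split (q ε M V : ℝ) (hq : 2 ≤ q) (hε : 0 < ε) (hM : 0 ≤ M) (hV : 0 ≤ V) :
    M ^ (q - 2) * V ≤ ε * M ^ q + (1 / ε) ^ ((q - 2) / 2) * V ^ (q / 2) := by
  have n1 : 0 ≤ ε * M ^ q := by positivity
  have n2 : 0 ≤ (1 / ε) ^ ((q - 2) / 2) * V ^ (q / 2) := by positivity
  have e0 : M ^ q = M ^ (q - 2) * M ^ 2 := by
    rw [← Real.rpow_natCast M 2, ← Real.rpow_add' hM (by push_cast; linarith)]; congr 1; push_cast; ring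
  rcases le_total V (ε * M ^ 2) with h | h
  · have : M ^ (q - 2) * V ≤ M ^ (q - 2) * (ε * M ^ 2) := by gcongr
    rw [e0] at *
    linarith
  · have h1 : M ^ 2 ≤ 1 / ε * V := by
      rw [one_div, inv_mul_eq_div, le_div_iff₀ hε]; linarith
    have h2 : M ^ (q - 2) ≤ (1 / ε * V) ^ ((q - 2) / 2) := by
      have : M ^ (q - 2) = (M ^ 2) ^ ((q - 2) / 2) := by
        rw [← Real.rpow_natCast, ← Real.rpow_mul hM]; congr 1; push_cast; ring
      rw [this]
      exact Real.rpow_le_rpow (by positivity) h1 (by linarith)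
    have e1 : V ^ (q / 2) = V ^ ((q - 2) / 2) * V := by
      rw [← Real.rpow_add_one' hV (by linarith)]; congr 1; ring
    calc M ^ (q - 2) * V ≤ (1 / ε * V) ^ ((q - 2) / 2) * V := by gcongr
      _ = (1 / ε) ^ ((q - 2) / 2) * V ^ (q / 2) := by
        rw [Real.mul_rpow (by positivity) hV, e1]; ring
      _ ≤ _ := by linarith

lemma doob_split (q M s : ℝ) (hq : 2 ≤ q) (hM : 0 ≤ M) (hs : 0 ≤ s) :
    M ^ (q - 1) * s ≤ 1 / 4 * M ^ q + 4 ^ (q - 1) * s ^ q := by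
  have n1 : 0 ≤ M ^ q := by positivity
  have n2 : 0 ≤ 4 ^ (q - 1) * s ^ q := by positivity
  have e : ∀ x : ℝ, 0 ≤ x → x ^ q = x ^ (q - 1) * x := fun x hx => by
    rw [← Real.rpow_add_one' hx (by linarith)]; congr 1; ring
  rcases le_total s (1 / 4 * M) with h | h
  · have : M ^ (q - 1) * s ≤ M ^ (q - 1) * (1 / 4 * M) := by gcongr
    rw [e M hM] at *
    linarith
  · calc M ^ (q - 1) * s ≤ (4 * s) ^ (q - 1) * s := by
          gcongr
          · linarith
          · linarith
      _ = 4 ^ (q - 1) * s ^ q := by rw [Real.mul_rpow (by norm_num) hs, e s hs]; ring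
      _ ≤ _ := by linarith

lemma doob_step (q m s : ℝ) (hq : 2 ≤ q) (hm : 0 ≤ m) (hs : 0 ≤ s) :
    (max m s) ^ q + 2 * (m ^ (q - 1) * s) ≤ m ^ q + 2 * ((max m s) ^ (q - 1) * s) := by
  rcases le_total s m with h | h
  · rw [max_eq_left h]
  rw [max_eq_right h]
  have e : s ^ q = s ^ (q - 1) * s := by
    rw [← Real.rpow_add_one' hs (by linarith)]; congr 1; ring
  have h1 : m ^ (q - 1) * s ≤ m ^ (q / 2) * s ^ (q / 2) := by
    rcases hs.eq_or_lt with rfl | hsp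
    · simp; positivity
    have : m ^ (q - 1) = m ^ (q / 2) * m ^ (q / 2 - 1) := by
      rw [← Real.rpow_add' hm (by linarith)]; congr 1; ring
    rw [this, mul_assoc]
    gcongr
    calc m ^ (q / 2 - 1) * s ≤ s ^ (q / 2 - 1) * s := by
          gcongr; linarith
      _ = s ^ (q / 2) := by rw [← Real.rpow_add_one hsp.ne']; congr 1; ring
  have h2 : ∀ x : ℝ, 0 ≤ x → x ^ q = x ^ (q / 2) * x ^ (q / 2) := fun x hx => by
    rw [← Real.rpow_add' hx (by linarith)]; congr 1; ring
  rw [← e]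
  have := h2 s hs
  have := h2 m hm
  nlinarith [sq_nonneg (m ^ (q / 2) - s ^ (q / 2))]

section prob
set_option linter.unusedSectionVars false
variable {Ω : Type} {m0 : MeasurableSpace Ω} {P : Measure Ω} [IsProbabilityMeasure P]

lemma int_rpow {E : Type} [NormedAddCommGroup E] {q : ℝ} (hq : 1 < q) {f : Ω → E}
    (hf : MemLp f (ENNReal.ofReal q) P) : Integrable (fun ω => ‖f ω‖ ^ q) P := by
  have := hf.integrable_norm_rpow'
  rwa [ENNReal.toReal_ofReal (by linarith)] at this

lemma memLp_of_int {E : Type} [NormedAddCommGroup E] {q : ℝ} (hq : 0 < q) {f : Ω → E}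
    (hm : AEStronglyMeasurable f P)
    (hf : Integrable (fun ω => ‖f ω‖ ^ q) P) : MemLp f (ENNReal.ofReal q) P := by
  rw [← integrable_norm_rpow_iff hm (by simpa using hq) (by simp)]
  rwa [ENNReal.toReal_ofReal (by linarith)]

lemma int_mul_rpow {E E' : Type} [NormedAddCommGroup E] [NormedAddCommGroup E']
    {q s t : ℝ} (hq : 1 < q) (hs : 0 ≤ s) (ht : 0 ≤ t) (hst : s + t = q)
    {f : Ω → E} {g : Ω → E'}
    (hf : MemLp f (ENNReal.ofReal q) P) (hg : MemLp g (ENNReal.ofReal q) P) :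
    Integrable (fun ω => ‖f ω‖ ^ s * ‖g ω‖ ^ t) P := by
  refine ((int_rpow hq hf).add (int_rpow hq hg)).mono' ?_ (ae_of_all _ fun ω => ?_)
  · exact ((hf.1.norm.aemeasurable.pow_const s).mul
      (hg.1.norm.aemeasurable.pow_const t)).aestronglyMeasurable
  · rw [Real.norm_of_nonneg (by positivity)]
    exact rpow_mul_le_add (norm_nonneg _) (norm_nonneg _) hs ht (by linarith) hst

lemma orth {m : MeasurableSpace Ω} (hm : m ≤ m0) {Z X : Ω → ℂ} (hZ : StronglyMeasurable[m] Z)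
    (hX : Integrable X P) (hc : P[X | m] =ᵐ[P] 0)
    (hi : Integrable (fun ω => ‖Z ω‖ * ‖X ω‖) P) :
    Integrable (fun ω => inner ℝ (Z ω) (X ω)) P ∧ ∫ ω, inner ℝ (Z ω) (X ω) ∂P = 0 := by
  have hI : Integrable (fun ω => inner ℝ (Z ω) (X ω)) P := by
    refine hi.mono' ((hZ.mono hm).aestronglyMeasurable.inner hX.1) (ae_of_all _ fun ω => ?_)
    exact norm_inner_le_norm _ _
  refine ⟨hI, ?_⟩
  have h := condExp_bilin_of_stronglyMeasurable_left (innerSL ℝ (E := ℂ)) hZ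
    hI hX
  rw [← integral_condExp hm]
  have : P[fun ω => inner ℝ (Z ω) (X ω) | m] =ᵐ[P] 0 := by
    refine EventuallyEq.trans h ?_
    filter_upwards [hc] with ω hω
    simp only [hω, Pi.zero_apply, map_zero]
  rw [integral_congr_ae this]; simp

/-- partial sums -/
noncomputable def pS (X : ℕ → Ω → ℂ) (k : ℕ) (ω : Ω) : ℂ := ∑ i ∈ Finset.range k, X i ω

/-- running maximum -/
noncomputable def pM (X : ℕ → Ω → ℂ) : ℕ → Ω → ℝ
  | 0 => fun _ => 0
  | k + 1 => fun ω => max (pM X k ω) ‖pS X (k + 1) ω‖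

lemma pS_succ (X : ℕ → Ω → ℂ) (k : ℕ) (ω : Ω) : pS X (k + 1) ω = pS X k ω + X k ω := by
  simp [pS, Finset.sum_range_succ]

lemma pM_nonneg (X : ℕ → Ω → ℂ) (k : ℕ) (ω : Ω) : 0 ≤ pM X k ω := by
  induction k with
  | zero => simp [pM]
  | succ k ih => exact ih.trans (le_max_left _ _)

lemma pS_le_pM (X : ℕ → Ω → ℂ) {k n : ℕ} (h : k ≤ n) (ω : Ω) : ‖pS X k ω‖ ≤ pM X n ω := by
  have mono : Monotone (fun n => pM X n ω) := monotone_nat_of_le_succ fun n => le_max_left _ _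
  refine le_trans ?_ (mono h)
  cases k with
  | zero => simp [pM, pS]
  | succ k => exact le_max_right _ _

variable {F : ℕ → MeasurableSpace Ω} {X : ℕ → Ω → ℂ} {q : ℝ}

lemma sm_pS (hF : Monotone F) (hX : ∀ k, StronglyMeasurable[F (k + 1)] (X k)) (k : ℕ) :
    StronglyMeasurable[F k] (pS X k) := by
  induction k with
  | zero => 
    have : pS X 0 = fun _ => 0 := by ext; simp [pS]
    rw [this]; exact stronglyMeasurable_const
  | succ k ih =>
    have : pS X (k + 1) = pS X k + X k := by ext; simp [pS_succ]
    rw [this]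
    exact (ih.mono (hF k.le_succ)).add (hX k)

lemma sm_pM (hF : Monotone F) (hX : ∀ k, StronglyMeasurable[F (k + 1)] (X k)) (k : ℕ) :
    StronglyMeasurable[F k] (pM X k) := by
  induction k with
  | zero => exact @stronglyMeasurable_const _ _ (F 0) _ 0
  | succ k ih =>
    have h1 := (ih.mono (hF k.le_succ)).measurable
    have h2 := (sm_pS hF hX (k + 1)).norm.measurable
    exact (Measurable.max h1 h2).stronglyMeasurable

lemma lp_pS (hL : ∀ k, MemLp (X k) (ENNReal.ofReal q) P) (k : ℕ) :
    MemLp (pS X k) (ENNReal.ofReal q) P := by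
  induction k with
  | zero =>
    have : pS X 0 = fun _ => 0 := by ext; simp [pS]
    rw [this]; exact MemLp.zero'
  | succ k ih =>
    have : pS X (k + 1) = pS X k + X k := by ext; simp [pS_succ]
    rw [this]
    exact ih.add (hL k)

lemma lp_pM (hL : ∀ k, MemLp (X k) (ENNReal.ofReal q) P) (k : ℕ) :
    MemLp (pM X k) (ENNReal.ofReal q) P := by
  induction k with
  | zero => exact MemLp.zero'
  | succ k ih => exact ih.sup (lp_pS hL (k + 1)).norm

lemma sm_rpow {m : MeasurableSpace Ω} {f : Ω → ℝ} (hf : StronglyMeasurable[m] f) (s : ℝ) :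
    StronglyMeasurable[m] (fun ω => f ω ^ s) :=
  (hf.measurable.pow_const s).stronglyMeasurable

lemma cross_zero (hq : 1 < q) (hF : Monotone F) (hle : ∀ k, F k ≤ m0)
    (hX : ∀ k, StronglyMeasurable[F (k + 1)] (X k)) (hc : ∀ k, P[X k | F k] =ᵐ[P] 0)
    (hL : ∀ k, MemLp (X k) (ENNReal.ofReal q) P) (k : ℕ) :
    Integrable (fun ω => ‖pS X k ω‖ ^ (q - 2) * inner ℝ (pS X k ω) (X k ω)) P ∧
    ∫ ω, ‖pS X k ω‖ ^ (q - 2) * inner ℝ (pS X k ω) (X k ω) ∂P = 0 := by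
  have hS := sm_pS hF hX k
  have h := orth (hle k) (Z := fun ω => (‖pS X k ω‖ ^ (q - 2)) • pS X k ω) (X := X k)
    ((sm_rpow hS.norm _).smul hS) ((hL k).integrable (by simpa using hq.le)) (hc k) ?_
  · simpa only [inner_smul_left, conj_trivial] using h
  · have := int_mul_rpow hq (s := q - 1) (t := 1) (by linarith) zero_le_one (by ring)
      (lp_pS hL k) (hL k)
    refine this.congr (ae_of_all _ fun ω => ?_)
    simp only [Real.rpow_one, norm_smul]
    congr 1
    rw [Real.norm_of_nonneg (by positivity)]
    rcases eq_or_ne (pS X k ω) 0 with h | h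
    · simp [h, Real.zero_rpow (by linarith : q - 1 ≠ 0)]
    · rw [← Real.rpow_add_one (norm_ne_zero_iff.2 h)]; congr 1; ring

lemma burk_small_sum (hq : 1 < q) (hq2 : q ≤ 2) (hF : Monotone F) (hle : ∀ k, F k ≤ m0)
    (hX : ∀ k, StronglyMeasurable[F (k + 1)] (X k)) (hc : ∀ k, P[X k | F k] =ᵐ[P] 0)
    (hL : ∀ k, MemLp (X k) (ENNReal.ofReal q) P) (n : ℕ) :
    ∫ ω, ‖pS X n ω‖ ^ q ∂P ≤
      (3 ^ q + q * 2 ^ (q - 1)) * ∑ k ∈ Finset.range n, ∫ ω, ‖X k ω‖ ^ q ∂P := by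
  induction n with
  | zero => simp [pS, Real.zero_rpow (by linarith : q ≠ 0)]
  | succ n ih =>
    obtain ⟨hi, h0⟩ := cross_zero hq hF hle hX hc hL n
    have i1 := int_rpow hq (lp_pS hL n)
    have i2 := int_rpow hq (hL n)
    have := integral_mono (int_rpow hq (lp_pS hL (n + 1)))
      ((i1.add (hi.const_mul q)).add (i2.const_mul (3 ^ q + q * 2 ^ (q - 1))))
      (fun ω => by
        simp only [pS_succ]
        exact pointwise_small q hq hq2 (pS X n ω) (X n ω))
    rw [integral_add' (i1.add (hi.const_mul q)) (i2.const_mul _),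
      integral_add' i1 (hi.const_mul q), integral_const_mul, integral_const_mul, h0] at this
    rw [Finset.sum_range_succ, mul_add]
    linarith

lemma big_sum (hq : 2 ≤ q) {C : ℝ}
    (hC : ∀ (a b : ℂ), ‖a + b‖ ^ q ≤ ‖a‖ ^ q + q * (‖a‖ ^ (q - 2) * inner ℝ a b) +
      C * (‖a‖ ^ (q - 2) * ‖b‖ ^ 2 + ‖b‖ ^ q))
    (hF : Monotone F) (hle : ∀ k, F k ≤ m0)
    (hX : ∀ k, StronglyMeasurable[F (k + 1)] (X k)) (hc : ∀ k, P[X k | F k] =ᵐ[P] 0)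
    (hL : ∀ k, MemLp (X k) (ENNReal.ofReal q) P) (n : ℕ) :
    ∫ ω, ‖pS X n ω‖ ^ q ∂P ≤
      C * (∑ k ∈ Finset.range n, ∫ ω, ‖pS X k ω‖ ^ (q - 2) * ‖X k ω‖ ^ 2 ∂P +
        ∑ k ∈ Finset.range n, ∫ ω, ‖X k ω‖ ^ q ∂P) := by
  have hq1 : 1 < q := by linarith
  induction n with
  | zero => simp [pS, Real.zero_rpow (by linarith : q ≠ 0)]
  | succ n ih =>
    obtain ⟨hi, h0⟩ := cross_zero hq1 hF hle hX hc hL n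
    have i1 := int_rpow hq1 (lp_pS hL n)
    have i2 := int_rpow hq1 (hL n)
    have i3 : Integrable (fun ω => ‖pS X n ω‖ ^ (q - 2) * ‖X n ω‖ ^ 2) P := by
      have := int_mul_rpow hq1 (s := q - 2) (t := 2) (by linarith) (by norm_num) (by ring)
        (lp_pS hL n) (hL n)
      simpa using this
    have := integral_mono (int_rpow hq1 (lp_pS hL (n + 1)))
      ((i1.add (hi.const_mul q)).add ((i3.add i2).const_mul C))
      (fun ω => by
        simp only [pS_succ]
        exact hC (pS X n ω) (X n ω))
    rw [integral_add' (i1.add (hi.const_mul q)) ((i3.add i2).const_mul C),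
      integral_add' i1 (hi.const_mul q), integral_const_mul, integral_const_mul, h0,
      integral_add' i3 i2] at this
    rw [Finset.sum_range_succ, Finset.sum_range_succ]
    linarith

lemma doob_sub (hq : 2 ≤ q) (hF : Monotone F) (hle : ∀ k, F k ≤ m0)
    (hX : ∀ k, StronglyMeasurable[F (k + 1)] (X k)) (hc : ∀ k, P[X k | F k] =ᵐ[P] 0)
    (hL : ∀ k, MemLp (X k) (ENNReal.ofReal q) P) (k : ℕ) :
    ∫ ω, pM X k ω ^ (q - 1) * ‖pS X k ω‖ ∂P ≤ ∫ ω, pM X k ω ^ (q - 1) * ‖pS X (k + 1) ω‖ ∂P := by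
  have hq1 : 1 < q := by linarith
  have hS := sm_pS hF hX k
  have hM := sm_pM hF hX k
  have key : ∀ {E : Type} [NormedAddCommGroup E] (f : Ω → E), MemLp f (ENNReal.ofReal q) P →
      Integrable (fun ω => pM X k ω ^ (q - 1) * ‖f ω‖) P := fun f hf => by
    have := int_mul_rpow hq1 (s := q - 1) (t := 1) (by linarith) zero_le_one (by ring)
      (lp_pM hL k) hf
    refine this.congr (ae_of_all _ fun ω => ?_)
    simp [abs_of_nonneg (pM_nonneg X k ω)]
  have sZ : StronglyMeasurable[F k]
      (fun ω => (pM X k ω ^ (q - 1) * ‖pS X k ω‖ ^ (-1 : ℝ)) • pS X k ω) :=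
    ((sm_rpow hM _).mul (sm_rpow hS.norm _)).smul hS
  have hp : ∀ ω, 0 ≤ pM X k ω ^ (q - 1) := fun ω => Real.rpow_nonneg (pM_nonneg X k ω) _
  have hb : ∀ ω, ‖(pM X k ω ^ (q - 1) * ‖pS X k ω‖ ^ (-1 : ℝ)) • pS X k ω‖ ≤
      pM X k ω ^ (q - 1) := fun ω => by
    rw [norm_smul, Real.norm_of_nonneg (mul_nonneg (hp ω) (by positivity)), mul_assoc,
      Real.rpow_neg_one]
    apply mul_le_of_le_one_right (hp ω)
    exact inv_mul_le_one
  obtain ⟨hi, h0⟩ := orth (hle k) sZ ((hL k).integrable (by simpa using hq1.le)) (hc k) (by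
    refine (key (X k) (hL k)).mono' ?_ (ae_of_all _ fun ω => ?_)
    · exact ((sZ.mono (hle k)).aestronglyMeasurable.norm.mul (hL k).1.norm)
    · rw [Real.norm_of_nonneg (by positivity)]
      exact mul_le_mul_of_nonneg_right (hb ω) (norm_nonneg _))
  have := integral_mono ((key _ (lp_pS hL k)).add hi) (key _ (lp_pS hL (k + 1))) (fun ω => by
    simp only [Pi.add_apply, inner_smul_left, conj_trivial, pS_succ, Real.rpow_neg_one]
    rw [mul_assoc, ← mul_add]
    refine mul_le_mul_of_nonneg_left ?_ (hp ω)
    rcases eq_or_ne (pS X k ω) 0 with h | h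
    · simp [h]
    have hpos : 0 < ‖pS X k ω‖ := norm_pos_iff.2 h
    have hcs := real_inner_le_norm (pS X k ω) (pS X k ω + X k ω)
    rw [inner_add_right, real_inner_self_eq_norm_sq] at hcs
    rw [← mul_le_mul_iff_right₀ hpos]
    refine le_trans (le_of_eq ?_) hcs
    field_simp)
  rw [integral_add' (key _ (lp_pS hL k)) hi, h0] at this
  linarith

lemma doob (hq : 2 ≤ q) (hF : Monotone F) (hle : ∀ k, F k ≤ m0)
    (hX : ∀ k, StronglyMeasurable[F (k + 1)] (X k)) (hc : ∀ k, P[X k | F k] =ᵐ[P] 0)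
    (hL : ∀ k, MemLp (X k) (ENNReal.ofReal q) P) (n : ℕ) :
    Integrable (fun ω => pM X n ω ^ q) P ∧
    ∫ ω, pM X n ω ^ q ∂P ≤ 4 * 4 ^ (q - 1) * ∫ ω, ‖pS X n ω‖ ^ q ∂P := by
  have hq1 : 1 < q := by linarith
  have iM : ∀ k, Integrable (fun ω => pM X k ω ^ q) P := fun k => by
    refine (int_rpow hq1 (lp_pM hL k)).congr (ae_of_all _ fun ω => ?_)
    simp [abs_of_nonneg (pM_nonneg X k ω)]
  have key : ∀ k j, Integrable (fun ω => pM X k ω ^ (q - 1) * ‖pS X j ω‖) P := fun k j => by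
    have := int_mul_rpow hq1 (s := q - 1) (t := 1) (by linarith) zero_le_one (by ring)
      (lp_pM hL k) (lp_pS hL j)
    refine this.congr (ae_of_all _ fun ω => ?_)
    simp [abs_of_nonneg (pM_nonneg X k ω)]
  refine ⟨iM n, ?_⟩
  have main : ∀ k, ∫ ω, pM X k ω ^ q ∂P ≤ 2 * ∫ ω, pM X k ω ^ (q - 1) * ‖pS X k ω‖ ∂P := by
    intro k
    induction k with
    | zero => simp [pM, pS, Real.zero_rpow (by linarith : q ≠ 0)]
    | succ k ih =>
      have h1 := doob_sub hq hF hle hX hc hL k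
      have := integral_mono ((iM (k + 1)).add ((key k (k + 1)).const_mul 2))
        ((iM k).add ((key (k + 1) (k + 1)).const_mul 2)) (fun ω =>
          doob_step q (pM X k ω) ‖pS X (k + 1) ω‖ hq (pM_nonneg X k ω) (norm_nonneg _))
      rw [integral_add' (iM (k + 1)) ((key k (k + 1)).const_mul 2),
        integral_add' (iM k) ((key (k + 1) (k + 1)).const_mul 2),
        integral_const_mul, integral_const_mul] at this
      linarith
  have iS := int_rpow hq1 (lp_pS hL n)
  have := integral_mono (key n n) (((iM n).const_mul (1 / 4)).add (iS.const_mul (4 ^ (q - 1))))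
    (fun ω => doob_split q (pM X n ω) ‖pS X n ω‖ hq (pM_nonneg X n ω) (norm_nonneg _))
  rw [integral_add' ((iM n).const_mul (1 / 4)) (iS.const_mul (4 ^ (q - 1))),
    integral_const_mul, integral_const_mul] at this
  linarith [main n]

lemma cond_swap (hq : 2 ≤ q) (hF : Monotone F)
    (hle : ∀ k, F k ≤ m0) (hX : ∀ k, StronglyMeasurable[F (k + 1)] (X k))
    (hL : ∀ k, MemLp (X k) (ENNReal.ofReal q) P) (k : ℕ) :
    Integrable (fun ω => ‖pS X k ω‖ ^ (q - 2) * (P[fun ω' => ‖X k ω'‖ ^ 2 | F k]) ω) P ∧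
    ∫ ω, ‖pS X k ω‖ ^ (q - 2) * ‖X k ω‖ ^ 2 ∂P =
      ∫ ω, ‖pS X k ω‖ ^ (q - 2) * (P[fun ω' => ‖X k ω'‖ ^ 2 | F k]) ω ∂P := by
  have hq1 : 1 < q := by linarith
  have i3 : Integrable (fun ω => ‖pS X k ω‖ ^ (q - 2) * ‖X k ω‖ ^ 2) P := by
    have := int_mul_rpow hq1 (s := q - 2) (t := 2) (by linarith) (by norm_num) (by ring)
      (lp_pS hL k) (hL k)
    simpa using this
  have i2 : Integrable (fun ω => ‖X k ω‖ ^ 2) P := by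
    refine MemLp.integrable_norm_pow ((hL k).mono_exponent ?_) (by norm_num)
    have : ((2 : ℕ) : ENNReal) = ENNReal.ofReal 2 := by simp
    rw [this]
    exact ENNReal.ofReal_le_ofReal hq
  have h := condExp_mul_of_stronglyMeasurable_left (sm_rpow (sm_pS hF hX k).norm (q - 2))
    (g := fun ω => ‖X k ω‖ ^ 2) i3 i2
  refine ⟨integrable_condExp.congr h, ?_⟩
  rw [← integral_condExp (hle k)]
  exact integral_congr_ae h

lemma int_V (hq : 2 ≤ q) (hL : ∀ k, MemLp (X k) (ENNReal.ofReal q) P) (n : ℕ) :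
    (∀ᵐ ω ∂P, ∀ k, 0 ≤ (P[fun ω' => ‖X k ω'‖ ^ 2 | F k]) ω) ∧
    Integrable (fun ω => (∑ k ∈ Finset.range n,
                    (P[fun ω' => ‖X k ω'‖ ^ 2 | F k]) ω) ^ (q / 2)) P := by
  have hnn : ∀ᵐ ω ∂P, ∀ k, 0 ≤ (P[fun ω' => ‖X k ω'‖ ^ 2 | F k]) ω := by
    rw [ae_all_iff]
    exact fun k => condExp_nonneg (ae_of_all _ fun ω => by positivity)
  refine ⟨hnn, ?_⟩
  have h1 : ∀ k, MemLp (fun ω' => ‖X k ω'‖ ^ 2) (ENNReal.ofReal (q / 2)) P := fun k => by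
    refine memLp_of_int (by linarith) ((hL k).1.norm.pow 2) ?_
    refine (int_rpow (by linarith) (hL k)).congr (ae_of_all _ fun ω => ?_)
    simp only [norm_pow, norm_norm]
    exact (norm_sq_rpow _ _).symm
  have h2 : MemLp (fun ω => ∑ k ∈ Finset.range n, (P[fun ω' => ‖X k ω'‖ ^ 2 | F k]) ω)
      (ENNReal.ofReal (q / 2)) P :=
    memLp_finsetSum _ fun k _ => (h1 k).condExp (by
      rw [← ENNReal.ofReal_one]; exact ENNReal.ofReal_le_ofReal (by linarith))
  have h3 := h2.integrable_norm_rpow'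
  rw [ENNReal.toReal_ofReal (by linarith)] at h3
  refine h3.congr ?_
  filter_upwards [hnn] with ω hω
  rw [Real.norm_of_nonneg (Finset.sum_nonneg fun k _ => hω k)]

lemma big_main (hq : 2 ≤ q) {C : ℝ} (hC0 : 0 < C)
    (hC : ∀ (a b : ℂ), ‖a + b‖ ^ q ≤ ‖a‖ ^ q + q * (‖a‖ ^ (q - 2) * inner ℝ a b) +
      C * (‖a‖ ^ (q - 2) * ‖b‖ ^ 2 + ‖b‖ ^ q)) {ε : ℝ} (hε : 0 < ε)
    (hε1 : C * (ε * (4 * 4 ^ (q - 1))) = 1 / 2)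
    (hF : Monotone F) (hle : ∀ k, F k ≤ m0)
    (hX : ∀ k, StronglyMeasurable[F (k + 1)] (X k)) (hc : ∀ k, P[X k | F k] =ᵐ[P] 0)
    (hL : ∀ k, MemLp (X k) (ENNReal.ofReal q) P) (n : ℕ) :
    ∫ ω, ‖pS X n ω‖ ^ q ∂P ≤
      2 * C * ((1 / ε) ^ ((q - 2) / 2) * (∫ ω, (∑ k ∈ Finset.range n,
                    (P[fun ω' => ‖X k ω'‖ ^ 2 | F k]) ω) ^ (q / 2) ∂P) +
        ∑ k ∈ Finset.range n, ∫ ω, ‖X k ω‖ ^ q ∂P) := by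
  have h1 := big_sum hq hC hF hle hX hc hL n
  obtain ⟨iM, hM⟩ := doob hq hF hle hX hc hL n
  obtain ⟨hnn, iV⟩ := int_V (P := P) (F := F) hq hL n
  have h2 : ∑ k ∈ Finset.range n, ∫ ω, ‖pS X k ω‖ ^ (q - 2) * ‖X k ω‖ ^ 2 ∂P ≤
      ε * ∫ ω, pM X n ω ^ q ∂P + (1 / ε) ^ ((q - 2) / 2) * (∫ ω, (∑ k ∈ Finset.range n,
                    (P[fun ω' => ‖X k ω'‖ ^ 2 | F k]) ω) ^ (q / 2) ∂P) := by
    rw [Finset.sum_congr rfl fun k _ => (cond_swap hq hF hle hX hL k).2,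
      ← integral_finsetSum _ fun k _ => (cond_swap hq hF hle hX hL k).1,
      ← integral_const_mul, ← integral_const_mul,
      ← integral_add (iM.const_mul _) (iV.const_mul _)]
    refine integral_mono_ae (integrable_finsetSum _ fun k _ => (cond_swap hq hF hle hX hL k).1)
      ((iM.const_mul _).add (iV.const_mul _)) ?_
    filter_upwards [hnn] with ω hω
    refine le_trans ?_ (young_split q ε (pM X n ω) _ hq hε (pM_nonneg X n ω)
      (Finset.sum_nonneg fun k _ => hω k))
    rw [Finset.mul_sum]
    refine Finset.sum_le_sum fun k hk => mul_le_mul_of_nonneg_right ?_ (hω k)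
    exact Real.rpow_le_rpow (norm_nonneg _) (pS_le_pM X (Finset.mem_range.1 hk).le ω) (by linarith)
  set A := ∫ ω, ‖pS X n ω‖ ^ q ∂P
  set B := ∫ ω, (∑ k ∈ Finset.range n,
                    (P[fun ω' => ‖X k ω'‖ ^ 2 | F k]) ω) ^ (q / 2) ∂P
  set R := ∑ k ∈ Finset.range n, ∫ ω, ‖X k ω‖ ^ q ∂P
  set T := ∑ k ∈ Finset.range n, ∫ ω, ‖pS X k ω‖ ^ (q - 2) * ‖X k ω‖ ^ 2 ∂P
  have h3 : C * T ≤ C * (ε * (4 * 4 ^ (q - 1) * A) + (1 / ε) ^ ((q - 2) / 2) * B) := by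
    refine mul_le_mul_of_nonneg_left (h2.trans ?_) hC0.le
    gcongr
  have h4 : C * (ε * (4 * 4 ^ (q - 1) * A)) = 1 / 2 * A := by rw [← hε1]; ring
  linarith

end prob

theorem burkholder_inequality (q : ℝ) (hq : 1 < q) :
    ∃ K : ℝ, 0 < K ∧
      ∀ (Ω : Type) (m0 : MeasurableSpace Ω) (P : Measure Ω), IsProbabilityMeasure P →
        ∀ (n : ℕ) (F : ℕ → MeasurableSpace Ω) (X : ℕ → Ω → ℂ),
          Monotone F → (∀ k, F k ≤ m0) →
          (∀ k ∈ Finset.range n, StronglyMeasurable[F (k + 1)] (X k)) →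
          (∀ k ∈ Finset.range n, P[X k | F k] =ᵐ[P] 0) →
          (∀ k ∈ Finset.range n, Integrable (fun ω => ‖X k ω‖ ^ q) P) →
          ∫ ω, ‖∑ k ∈ Finset.range n, X k ω‖ ^ q ∂P ≤
            K * ((∫ ω, (∑ k ∈ Finset.range n,
                    (P[fun ω' => ‖X k ω'‖ ^ 2 | F k]) ω) ^ (q / 2) ∂P) +
                 ∑ k ∈ Finset.range n, ∫ ω, ‖X k ω‖ ^ q ∂P) := by
  -- reduction to sequences with all the properties for every index
  suffices H : ∃ K : ℝ, 0 < K ∧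
      ∀ (Ω : Type) (m0 : MeasurableSpace Ω) (P : Measure Ω), IsProbabilityMeasure P →
        ∀ (n : ℕ) (F : ℕ → MeasurableSpace Ω) (X : ℕ → Ω → ℂ),
          Monotone F → (∀ k, F k ≤ m0) →
          (∀ k, StronglyMeasurable[F (k + 1)] (X k)) →
          (∀ k, P[X k | F k] =ᵐ[P] 0) →
          (∀ k, MemLp (X k) (ENNReal.ofReal q) P) →
          ∫ ω, ‖pS X n ω‖ ^ q ∂P ≤
            K * ((∫ ω, (∑ k ∈ Finset.range n,
                    (P[fun ω' => ‖X k ω'‖ ^ 2 | F k]) ω) ^ (q / 2) ∂P) +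
                 ∑ k ∈ Finset.range n, ∫ ω, ‖X k ω‖ ^ q ∂P) by
    obtain ⟨K, hK, H⟩ := H
    refine ⟨K, hK, ?_⟩
    intro Ω m0 P hP n F X hF hle hX hc hI
    let Y : ℕ → Ω → ℂ := fun k => if k < n then X k else 0
    have hY : ∀ k ∈ Finset.range n, Y k = X k := fun k hk => by
      simp [Y, Finset.mem_range.1 hk]
    have hY0 : ∀ k, ¬ k < n → Y k = 0 := fun k hk => by simp [Y, hk]
    have h := H Ω m0 P hP n F Y hF hle
      (fun k => by
        by_cases hk : k < n
        · rw [hY k (Finset.mem_range.2 hk)]; exact hX k (Finset.mem_range.2 hk)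
        · rw [hY0 k hk]; exact stronglyMeasurable_zero)
      (fun k => by
        by_cases hk : k < n
        · rw [hY k (Finset.mem_range.2 hk)]; exact hc k (Finset.mem_range.2 hk)
        · rw [hY0 k hk, condExp_zero])
      (fun k => by
        by_cases hk : k < n
        · rw [hY k (Finset.mem_range.2 hk)]
          exact memLp_of_int (by linarith)
            ((hX k (Finset.mem_range.2 hk)).mono (hle _)).aestronglyMeasurable
            (hI k (Finset.mem_range.2 hk))
        · rw [hY0 k hk]; exact MemLp.zero)
    have e1 : ∀ ω, pS Y n ω = ∑ k ∈ Finset.range n, X k ω := fun ω =>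
      Finset.sum_congr rfl fun k hk => by rw [hY k hk]
    have e2 : ∀ ω, ∑ k ∈ Finset.range n, (P[fun ω' => ‖Y k ω'‖ ^ 2 | F k]) ω =
        ∑ k ∈ Finset.range n, (P[fun ω' => ‖X k ω'‖ ^ 2 | F k]) ω := fun ω =>
      Finset.sum_congr rfl fun k hk => by rw [hY k hk]
    have e3 : ∑ k ∈ Finset.range n, ∫ ω, ‖Y k ω‖ ^ q ∂P =
        ∑ k ∈ Finset.range n, ∫ ω, ‖X k ω‖ ^ q ∂P :=
      Finset.sum_congr rfl fun k hk => by rw [hY k hk]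
    simp only [e1, e2, e3] at h
    exact h
  rcases le_total q 2 with hq2 | hq2
  · refine ⟨3 ^ q + q * 2 ^ (q - 1), by positivity, ?_⟩
    intro Ω m0 P hP n F X hF hle hX hc hL
    refine (burk_small_sum hq hq2 hF hle hX hc hL n).trans ?_
    refine mul_le_mul_of_nonneg_left ?_ (by positivity)
    refine le_add_of_nonneg_left (integral_nonneg_of_ae ?_)
    have hnn : ∀ᵐ ω ∂P, ∀ k, 0 ≤ (P[fun ω' => ‖X k ω'‖ ^ 2 | F k]) ω := by
      rw [ae_all_iff]
      exact fun k => condExp_nonneg (ae_of_all _ fun ω => by positivity)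
    filter_upwards [hnn] with ω hω
    exact Real.rpow_nonneg (Finset.sum_nonneg fun k _ => hω k) _
  · obtain ⟨C, hC0, hC⟩ := pointwise_big q hq2
    set ε : ℝ := 1 / (2 * C * (4 * 4 ^ (q - 1))) with hεd
    have h4 : (0 : ℝ) < 4 ^ (q - 1) := by positivity
    have hε : 0 < ε := by positivity
    have hε1 : C * (ε * (4 * 4 ^ (q - 1))) = 1 / 2 := by
      rw [hεd]; field_simp
    set D : ℝ := (1 / ε) ^ ((q - 2) / 2) with hD
    have hDp : 0 < D := by positivity
    refine ⟨2 * C * (D + 1), by positivity, ?_⟩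
    intro Ω m0 P hP n F X hF hle hX hc hL
    refine (big_main hq2 hC0 hC hε hε1 hF hle hX hc hL n).trans ?_
    obtain ⟨hnn, -⟩ := int_V (P := P) (F := F) hq2 hL n
    have hB : 0 ≤ ∫ ω, (∑ k ∈ Finset.range n,
        (P[fun ω' => ‖X k ω'‖ ^ 2 | F k]) ω) ^ (q / 2) ∂P := by
      refine integral_nonneg_of_ae ?_
      filter_upwards [hnn] with ω hω
      exact Real.rpow_nonneg (Finset.sum_nonneg fun k _ => hω k) _
    have hR : 0 ≤ ∑ k ∈ Finset.range n, ∫ ω, ‖X k ω‖ ^ q ∂P :=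
      Finset.sum_nonneg fun k _ => integral_nonneg fun ω => by positivity
    rw [mul_assoc (2 * C)]
    refine mul_le_mul_of_nonneg_left ?_ (by positivity)
    nlinarith [mul_nonneg hDp.le hR]
end

section
/- Suppose that for each n, (Y_{n,1}, Y_{n,2}, …, Y_{n,r_n}) is a real martingale difference sequence with respect to an increasing filtration (F_{n,j})_{j=0}^{r_n} (i.e., Y_{n,j} is F_{n,j}-measurable and E[Y_{n,j} | F_{n,j−1}] = 0) with E[Y_{n,j}²] < ∞ for all j. Assume that (i) ∑_{j=1}^{r_n} E[Y_{n,j}² | F_{n,j−1}] → σ² in probability as n → ∞, where σ² > 0 is a constant, and (ii) for every ε > 0, ∑_{j=1}^{r_n} E[Y_{n,j}² 1{|Y_{n,j}| ≥ ε}] → 0 as n → ∞. Then ∑_{j=1}^{r_n} Y_{n,j} converges in distribution to the Gaussian law N(0, σ²). -/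
open MeasureTheory ProbabilityTheory Filter
open scoped BigOperators Topology NNReal

namespace MCLT

lemma abs_sin_sub_le (x : ℝ) : |Real.sin x - x| ≤ |x| ^ 3 / 6 := by
  wlog hx : 0 ≤ x generalizing x
  · have := this (-x) (by linarith)
    rw [Real.sin_neg, abs_neg] at this
    rwa [← abs_neg, show -(Real.sin x - x) = -Real.sin x - -x by ring]
  have h1 := Real.sin_ge_sub_cube hx
  have h2 := Real.sin_le hx
  rw [abs_of_nonneg hx, abs_le]
  constructor <;> nlinarith [pow_nonneg hx 3]

lemma cos_rem_le (x : ℝ) : Real.cos x - 1 + x ^ 2 / 2 ≤ |x| ^ 3 / 2 := by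
  have h0 : 0 ≤ |x| := abs_nonneg x
  have hsq : x ^ 2 = |x| ^ 2 := (sq_abs x).symm
  rw [← Real.cos_abs x, hsq]
  generalize |x| = y at h0
  by_cases hy : 1 ≤ y
  · have := Real.cos_le_one y
    nlinarith [mul_nonneg (sq_nonneg y) (sub_nonneg.2 hy)]
  · push Not at hy
    have h1 := Real.sin_ge_sub_cube (x := y / 2) (by linarith)
    have h2 : Real.cos y = 1 - 2 * Real.sin (y / 2) ^ 2 := by
      have := Real.cos_sq' (y / 2)
      have h3 := Real.cos_two_mul (y / 2)
      rw [show 2 * (y / 2) = y by ring] at h3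
      linarith
    have h4 : 0 ≤ y / 2 - (y / 2) ^ 3 / 6 := by nlinarith [mul_nonneg h0 (sq_nonneg y)]
    have h5 := pow_le_pow_left₀ h4 h1 2
    have h6 : y ^ 4 ≤ y ^ 3 := by nlinarith [pow_nonneg h0 3]
    nlinarith [pow_nonneg h0 3, pow_nonneg h0 6]

/-- Taylor remainder of the complex exponential. -/
lemma exp_rem (x : ℝ) :
    ‖Complex.exp (x * Complex.I) - 1 - x * Complex.I + (x : ℂ) ^ 2 / 2‖ ≤ |x| ^ 3 ∧
    ‖Complex.exp (x * Complex.I) - 1 - x * Complex.I + (x : ℂ) ^ 2 / 2‖ ≤ 2 * x ^ 2 := by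
  have hre : (Complex.exp (x * Complex.I) - 1 - x * Complex.I + (x : ℂ) ^ 2 / 2)
      = ((Real.cos x - 1 + x ^ 2 / 2 : ℝ) : ℂ) + ((Real.sin x - x : ℝ) : ℂ) * Complex.I := by
    rw [Complex.exp_mul_I]; push_cast; ring
  rw [hre]
  have hn : ‖((Real.cos x - 1 + x ^ 2 / 2 : ℝ) : ℂ) + ((Real.sin x - x : ℝ) : ℂ) * Complex.I‖
      ≤ |Real.cos x - 1 + x ^ 2 / 2| + |Real.sin x - x| := by
    refine (norm_add_le _ _).trans ?_
    rw [norm_mul, Complex.norm_I, mul_one, Complex.norm_real, Complex.norm_real]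
    rfl
  have h0 := Real.one_sub_sq_div_two_le_cos (x := x)
  rw [abs_of_nonneg (by linarith)] at hn
  have h1 := abs_sin_sub_le x
  have h2 := cos_rem_le x
  have hx := abs_nonneg x
  constructor
  · nlinarith [pow_nonneg hx 3]
  · have h3 : |Real.sin x - x| ≤ 2 * |x| := by
      have := abs_sub (Real.sin x) x
      have := Real.abs_sin_le_abs (x := x)
      linarith
    have h4 := Real.cos_le_one x
    have h5 : |Real.sin x - x| ≤ x ^ 2 := by
      rw [← sq_abs x]
      by_cases hy : 2 ≤ |x|
      · nlinarith
      · push Not at hy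
        nlinarith [mul_nonneg (sq_nonneg |x|) (sub_nonneg.2 hy.le)]
    nlinarith

lemma exp_neg_rem (x : ℝ) (hx : 0 ≤ x) : |Real.exp (-x) - 1 + x| ≤ x ^ 2 := by
  have h1 := Real.add_one_le_exp (-x)
  rw [abs_of_nonneg (by linarith)]
  have h2 := Real.add_one_le_exp x
  have h3 : Real.exp (-x) * Real.exp x = 1 := by rw [← Real.exp_add]; simp
  have h4 := Real.exp_pos (-x)
  have h5 : Real.exp (-x) * (1 + x) ≤ 1 := by nlinarith
  have h6 : Real.exp (-x) ≤ 1 := by nlinarith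
  nlinarith

lemma integral_mul_condExp {Ω : Type*} {m m0 : MeasurableSpace Ω} (P : Measure Ω)
    [IsProbabilityMeasure P] (hm : m ≤ m0) (H : Ω → ℂ) (hH : StronglyMeasurable[m] H)
    (K : ℝ) (hK : ∀ ω, ‖H ω‖ ≤ K) (g w : Ω → ℝ) (hg : Integrable g P)
    (hw : P[g | m] =ᵐ[P] w) :
    ∫ ω, H ω * (g ω : ℂ) ∂P = ∫ ω, H ω * (w ω : ℂ) ∂P := by
  let B : ℂ →L[ℝ] ℝ →L[ℝ] ℂ := (ContinuousLinearMap.lsmul ℝ ℝ).flip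
  have hB : ∀ (z : ℂ) (x : ℝ), B z x = z * (x : ℂ) := by
    intro z x
    simp [B, mul_comm]
  have h := condExp_stronglyMeasurable_bilin_of_bound B hm hH hg K (ae_of_all _ hK)
  simp only [hB] at h
  rw [← integral_condExp hm, integral_congr_ae h]
  apply integral_congr_ae
  filter_upwards [hw] with ω hω
  rw [hω]

lemma step {Ω : Type*} {m m0 : MeasurableSpace Ω} (P : Measure Ω)
    [IsProbabilityMeasure P] (hm : m ≤ m0) (H : Ω → ℂ) (hH : StronglyMeasurable[m] H)
    (K : ℝ) (hK : ∀ ω, ‖H ω‖ ≤ K) (Z w : Ω → ℝ) (hZ : Measurable Z)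
    (hZ2 : Integrable (fun ω => Z ω ^ 2) P)
    (hZ0 : P[Z | m] =ᵐ[P] 0) (hwm : StronglyMeasurable[m] w)
    (hw : P[fun ω => Z ω ^ 2 | m] =ᵐ[P] w) (C : ℝ) (hw0 : ∀ ω, 0 ≤ w ω) (hwC : ∀ ω, w ω ≤ C)
    (t ε : ℝ) (hε : 0 < ε) :
    ‖∫ ω, H ω * (Complex.exp ((t * Z ω : ℝ) * Complex.I) - (Real.exp (-(t ^ 2 * w ω / 2)) : ℝ)) ∂P‖
      ≤ K * ((ε * |t| ^ 3 + t ^ 4 * ε ^ 2) * ∫ ω, Z ω ^ 2 ∂P + (2 * t ^ 2 + t ^ 4 * C) *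
        ∫ ω, Set.indicator {ω' | ε ≤ |Z ω'|} (fun ω' => Z ω' ^ 2) ω ∂P) := by
  set J : Ω → ℝ := Set.indicator {ω' | ε ≤ |Z ω'|} (fun ω' => Z ω' ^ 2) with hJ
  have hset : MeasurableSet {ω' | ε ≤ |Z ω'|} := measurableSet_le measurable_const (by fun_prop)
  have hJi : Integrable J P := hZ2.indicator hset
  have hJ0 : ∀ ω, 0 ≤ J ω := fun ω => Set.indicator_nonneg (fun _ _ => sq_nonneg _) ω
  have hZL2 : MemLp Z 2 P := (memLp_two_iff_integrable_sq hZ.aestronglyMeasurable).2 hZ2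
  have hZi : Integrable Z P := hZL2.integrable (by norm_num)
  have hwm' : StronglyMeasurable w := hwm.mono hm
  have hH' : StronglyMeasurable H := hH.mono hm
  have hwi : Integrable w P := integrable_condExp.congr hw
  have hC : ∀ ω, 0 ≤ C := fun ω => (hw0 ω).trans (hwC ω)
  set g : Ω → ℝ := P[J | m] with hg
  have hgi : Integrable g P := integrable_condExp
  have hJZ : ∀ ω, Z ω ^ 2 ≤ ε ^ 2 + J ω := by
    intro ω
    by_cases h : ε ≤ |Z ω|
    · simp only [hJ]; rw [Set.indicator_of_mem (by exact h)]; nlinarith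
    · have := hJ0 ω
      push Not at h
      have : Z ω ^ 2 ≤ ε ^ 2 := by
        rw [← sq_abs]; exact pow_le_pow_left₀ (abs_nonneg _) h.le 2
      linarith
  have hg0 : ∀ᵐ ω ∂P, 0 ≤ g ω := condExp_nonneg (ae_of_all _ hJ0)
  have hwg : ∀ᵐ ω ∂P, w ω ≤ ε ^ 2 + g ω := by
    have h1 : P[fun ω => Z ω ^ 2 | m] ≤ᵐ[P] P[(fun _ => ε ^ 2) + J | m] :=
      condExp_mono hZ2 ((integrable_const _).add hJi) (ae_of_all _ hJZ)
    have h2 := condExp_add (integrable_const (ε ^ 2)) hJi m (μ := P)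
    filter_upwards [h1, h2, hw] with ω h1 h2 h3
    rw [h2, h3] at h1
    simpa [condExp_const hm] using h1
  have hIH : ∀ f : Ω → ℝ, Integrable f P → Integrable (fun ω => H ω * (f ω : ℂ)) P := by
    intro f hf
    exact hf.ofReal.bdd_mul hH'.aestronglyMeasurable (ae_of_all _ hK)
  have e1 : ∫ ω, H ω * (Z ω : ℂ) ∂P = 0 := by
    rw [integral_mul_condExp P hm H hH K hK Z 0 hZi hZ0]; simp
  have e2 : ∫ ω, H ω * ((Z ω ^ 2 : ℝ) : ℂ) ∂P = ∫ ω, H ω * (w ω : ℂ) ∂P :=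
    integral_mul_condExp P hm H hH K hK _ w hZ2 hw
  set D : Ω → ℂ := fun ω =>
    Complex.exp ((t * Z ω : ℝ) * Complex.I) - (Real.exp (-(t ^ 2 * w ω / 2)) : ℝ) with hD
  have hDm : Measurable D := by
    have := hwm'.measurable
    fun_prop
  have hDi : Integrable (fun ω => H ω * D ω) P := by
    refine Integrable.of_bound (hH'.aestronglyMeasurable.mul hDm.aestronglyMeasurable) (K * 2)
      (ae_of_all _ fun ω => ?_)
    rw [norm_mul]
    refine mul_le_mul (hK ω) ?_ (norm_nonneg _) ((norm_nonneg _).trans (hK ω))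
    refine (norm_sub_le _ _).trans ?_
    rw [Complex.norm_exp_ofReal_mul_I, Complex.norm_real, Real.norm_eq_abs, Real.abs_exp]
    have : Real.exp (-(t ^ 2 * w ω / 2)) ≤ 1 := by
      rw [Real.exp_le_one_iff]
      have := mul_nonneg (sq_nonneg t) (hw0 ω)
      linarith
    linarith
  have hI1 := hIH Z hZi
  have hI2 := hIH _ hZ2
  have hI3 := hIH w hwi
  have hI4 := (hI1.const_mul ((t : ℂ) * Complex.I))
  have hI6 : Integrable (fun ω => H ω * D ω - (t * Complex.I) * (H ω * (Z ω : ℂ))) P := hDi.sub hI4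
  have hI5 : Integrable (fun ω => ((t : ℂ) ^ 2 / 2) *
      (H ω * ((Z ω ^ 2 : ℝ) : ℂ) - H ω * (w ω : ℂ))) P := (hI2.sub hI3).const_mul ((t : ℂ) ^ 2 / 2)
  have e3 : ∫ ω, H ω * D ω ∂P = ∫ ω, (H ω * D ω - (t * Complex.I) * (H ω * (Z ω : ℂ))
      + ((t : ℂ) ^ 2 / 2) * (H ω * ((Z ω ^ 2 : ℝ) : ℂ) - H ω * (w ω : ℂ))) ∂P := by
    rw [integral_add hI6 hI5, integral_sub hDi hI4, integral_const_mul,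
      integral_const_mul, integral_sub hI2 hI3, e1, e2]
    simp
  rw [e3]
  have e4 : ∫ ω, w ω ∂P = ∫ ω, Z ω ^ 2 ∂P := by
    rw [← integral_condExp hm (f := fun ω => Z ω ^ 2)]
    exact integral_congr_ae hw.symm
  have e5 : ∫ ω, g ω ∂P = ∫ ω, J ω ∂P := integral_condExp hm
  have hb1 : Integrable (fun ω => (ε * |t| ^ 3) * Z ω ^ 2 + (2 * t ^ 2) * J ω) P :=
    (hZ2.const_mul _).add (hJi.const_mul _)
  have hb2 : Integrable (fun ω => (t ^ 4 * ε ^ 2) * w ω + (t ^ 4 * C) * g ω) P :=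
    (hwi.const_mul _).add (hgi.const_mul _)
  have e6 : K * ((ε * |t| ^ 3 + t ^ 4 * ε ^ 2) * ∫ ω, Z ω ^ 2 ∂P + (2 * t ^ 2 + t ^ 4 * C) *
        ∫ ω, J ω ∂P) = ∫ ω, K * (((ε * |t| ^ 3) * Z ω ^ 2 + (2 * t ^ 2) * J ω) +
          ((t ^ 4 * ε ^ 2) * w ω + (t ^ 4 * C) * g ω)) ∂P := by
    rw [integral_const_mul, integral_add hb1 hb2, integral_add (hZ2.const_mul _) (hJi.const_mul _),
      integral_add (hwi.const_mul _) (hgi.const_mul _)]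
    simp only [integral_const_mul]
    rw [e4, e5]; ring
  rw [e6]
  refine norm_integral_le_of_norm_le ((hb1.add hb2).const_mul K) ?_
  filter_upwards [hwg, hg0] with ω hω hgn
  have hfac : H ω * D ω - (t * Complex.I) * (H ω * (Z ω : ℂ))
      + ((t : ℂ) ^ 2 / 2) * (H ω * ((Z ω ^ 2 : ℝ) : ℂ) - H ω * (w ω : ℂ))
      = H ω * ((Complex.exp ((t * Z ω : ℝ) * Complex.I) - 1 - (t * Z ω : ℝ) * Complex.I
        + ((t * Z ω : ℝ) : ℂ) ^ 2 / 2)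
        - ((Real.exp (-(t ^ 2 * w ω / 2)) - 1 + t ^ 2 * w ω / 2 : ℝ) : ℂ)) := by
    simp only [hD]; push_cast; ring
  rw [hfac, norm_mul]
  refine mul_le_mul (hK ω) ?_ (norm_nonneg _) ((norm_nonneg _).trans (hK ω))
  refine (norm_sub_le _ _).trans (add_le_add ?_ ?_)
  · obtain ⟨r1, r2⟩ := exp_rem (t * Z ω)
    by_cases h : ε ≤ |Z ω|
    · have : J ω = Z ω ^ 2 := by simp only [hJ]; rw [Set.indicator_of_mem (by exact h)]
      rw [this]
      have : 0 ≤ ε * |t| ^ 3 * Z ω ^ 2 := by positivity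
      nlinarith
    · have hj := mul_nonneg (mul_nonneg zero_le_two (sq_nonneg t)) (hJ0 ω)
      push Not at h
      refine r1.trans ?_
      have : |t * Z ω| ^ 3 = |t| ^ 3 * (|Z ω| * Z ω ^ 2) := by
        rw [abs_mul, ← sq_abs (Z ω)]; ring
      rw [this]
      have : |t| ^ 3 * (|Z ω| * Z ω ^ 2) ≤ |t| ^ 3 * (ε * Z ω ^ 2) := by gcongr
      nlinarith
  · rw [Complex.norm_real, Real.norm_eq_abs]
    have hu : 0 ≤ t ^ 2 * w ω / 2 := by have := hw0 ω; positivity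
    refine (exp_neg_rem _ hu).trans ?_
    have a1 : w ω ^ 2 ≤ ε ^ 2 * w ω + C * g ω := by
      nlinarith [hw0 ω, hwC ω, mul_le_mul_of_nonneg_right hω (hw0 ω),
          mul_le_mul_of_nonneg_right (hwC ω) hgn]
    have a2 := mul_le_mul_of_nonneg_left a1 (show 0 ≤ t ^ 4 by positivity)
    nlinarith [show 0 ≤ t ^ 4 * w ω ^ 2 by positivity]

lemma telescope {Ω : Type*} {m0 : MeasurableSpace Ω} (P : Measure Ω)
    [IsProbabilityMeasure P] (r : ℕ) (Z w : ℕ → Ω → ℝ) (F : ℕ → MeasurableSpace Ω)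
    (hmono : Monotone F) (hle : ∀ j, F j ≤ m0)
    (hZ : ∀ j < r, StronglyMeasurable[F (j + 1)] (Z j))
    (hZ2 : ∀ j < r, Integrable (fun ω => Z j ω ^ 2) P)
    (hZ0 : ∀ j < r, P[Z j | F j] =ᵐ[P] 0)
    (hwm : ∀ j < r, StronglyMeasurable[F j] (w j))
    (hw : ∀ j < r, P[fun ω => Z j ω ^ 2 | F j] =ᵐ[P] w j)
    (C : ℝ) (hw0 : ∀ j ω, 0 ≤ w j ω) (hwC : ∀ ω, ∑ j ∈ Finset.range r, w j ω ≤ C)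
    (t ε : ℝ) (hε : 0 < ε) :
    ‖∫ ω, Complex.exp ((t * ∑ j ∈ Finset.range r, Z j ω : ℝ) * Complex.I) *
        (Real.exp (t ^ 2 * (∑ j ∈ Finset.range r, w j ω) / 2) : ℝ) ∂P - 1‖
      ≤ Real.exp (t ^ 2 * C / 2) * ((ε * |t| ^ 3 + t ^ 4 * ε ^ 2) * C + (2 * t ^ 2 + t ^ 4 * C) *
        ∑ j ∈ Finset.range r,
          ∫ ω, Set.indicator {ω' | ε ≤ |Z j ω'|} (fun ω' => Z j ω' ^ 2) ω ∂P) := by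
  set M := Real.exp (t ^ 2 * C / 2) with hM
  have hM0 : 0 < M := Real.exp_pos _
  have hWk : ∀ k ≤ r, ∀ ω, ∑ j ∈ Finset.range k, w j ω ≤ C := fun k hk ω =>
    (Finset.sum_le_sum_of_subset_of_nonneg (Finset.range_mono hk) (fun j _ _ => hw0 j ω)).trans
      (hwC ω)
  have hexpM : ∀ k ≤ r, ∀ ω, Real.exp (t ^ 2 * (∑ j ∈ Finset.range k, w j ω) / 2) ≤ M := by
    intro k hk ω
    rw [hM, Real.exp_le_exp]
    have := mul_le_mul_of_nonneg_left (hWk k hk ω) (sq_nonneg t)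
    linarith
  have hSm : ∀ k ≤ r, ∀ l ≤ r, l ≤ k + 1 → StronglyMeasurable[F k] (fun ω =>
      Complex.exp ((t * ∑ j ∈ Finset.range k, Z j ω : ℝ) * Complex.I) *
        (Real.exp (t ^ 2 * (∑ j ∈ Finset.range l, w j ω) / 2) : ℝ)) := by
    intro k hk l hl hlk
    have h1 : Measurable[F k] (fun ω => ∑ j ∈ Finset.range k, Z j ω) := by
      refine @Finset.measurable_fun_sum _ _ _ _ _ _ (F k) _ _ ?_
      intro j hj
      rw [Finset.mem_range] at hj
      exact ((hZ j (by omega)).mono (hmono (by omega))).measurable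
    have h2 : Measurable[F k] (fun ω => ∑ j ∈ Finset.range l, w j ω) := by
      refine @Finset.measurable_fun_sum _ _ _ _ _ _ (F k) _ _ ?_
      intro j hj
      rw [Finset.mem_range] at hj
      exact ((hwm j (by omega)).mono (hmono (by omega))).measurable
    have h3 : Measurable (fun p : ℝ × ℝ => Complex.exp ((t * p.1 : ℝ) * Complex.I) *
        (Real.exp (t ^ 2 * p.2 / 2) : ℝ)) := by fun_prop
    exact (h3.comp (h1.prodMk h2)).stronglyMeasurable
  have hnorm : ∀ k ω, ∀ l ≤ r, ‖Complex.exp ((t * ∑ j ∈ Finset.range k, Z j ω : ℝ) * Complex.I) *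
        (Real.exp (t ^ 2 * (∑ j ∈ Finset.range l, w j ω) / 2) : ℝ)‖ ≤ M := by
    intro k ω l hl
    rw [norm_mul, Complex.norm_exp_ofReal_mul_I, Complex.norm_real, Real.norm_eq_abs, Real.abs_exp,
      one_mul]
    exact hexpM l hl ω
  have hAi : ∀ k ≤ r, Integrable (fun ω =>
      Complex.exp ((t * ∑ j ∈ Finset.range k, Z j ω : ℝ) * Complex.I) *
        (Real.exp (t ^ 2 * (∑ j ∈ Finset.range k, w j ω) / 2) : ℝ)) P := fun k hk =>
    Integrable.of_bound ((hSm k hk k hk (by omega)).mono (hle k)).aestronglyMeasurable M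
      (ae_of_all _ fun ω => hnorm k ω k hk)
  have key : ∀ k ≤ r, ‖∫ ω, Complex.exp ((t * ∑ j ∈ Finset.range k, Z j ω : ℝ) * Complex.I) *
        (Real.exp (t ^ 2 * (∑ j ∈ Finset.range k, w j ω) / 2) : ℝ) ∂P - 1‖
      ≤ ∑ j ∈ Finset.range k, M * ((ε * |t| ^ 3 + t ^ 4 * ε ^ 2) * ∫ ω, Z j ω ^ 2 ∂P +
        (2 * t ^ 2 + t ^ 4 * C) *
          ∫ ω, Set.indicator {ω' | ε ≤ |Z j ω'|} (fun ω' => Z j ω' ^ 2) ω ∂P) := by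
    intro k
    induction k with
    | zero => intro _; simp
    | succ k ih =>
      intro hk
      have ih := ih (by omega)
      have hkr : k < r := by omega
      rw [Finset.sum_range_succ]
      have hst := step P (hle k) _ (hSm k hkr.le (k + 1) hk le_rfl) M
        (fun ω => hnorm k ω (k + 1) hk) (Z k) (w k) ((hZ k hkr).mono (hle _)).measurable
        (hZ2 k hkr) (hZ0 k hkr) (hwm k hkr) (hw k hkr) C (hw0 k)
        (fun ω => (Finset.single_le_sum (f := fun j => w j ω) (fun j _ => hw0 j ω)
          (Finset.mem_range.2 hkr)).trans (hwC ω)) t ε hε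
      have hdiff : ∫ ω, Complex.exp ((t * ∑ j ∈ Finset.range (k + 1), Z j ω : ℝ) * Complex.I) *
        (Real.exp (t ^ 2 * (∑ j ∈ Finset.range (k + 1), w j ω) / 2) : ℝ) ∂P - 1
        = (∫ ω, Complex.exp ((t * ∑ j ∈ Finset.range k, Z j ω : ℝ) * Complex.I) *
        (Real.exp (t ^ 2 * (∑ j ∈ Finset.range k, w j ω) / 2) : ℝ) ∂P - 1) +
        ∫ ω, (Complex.exp ((t * ∑ j ∈ Finset.range k, Z j ω : ℝ) * Complex.I) *
        (Real.exp (t ^ 2 * (∑ j ∈ Finset.range (k + 1), w j ω) / 2) : ℝ)) *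
        (Complex.exp ((t * Z k ω : ℝ) * Complex.I)
          - (Real.exp (-(t ^ 2 * w k ω / 2)) : ℝ)) ∂P := by
        rw [sub_add_eq_add_sub, sub_left_inj, ← sub_eq_iff_eq_add',
          ← integral_sub (hAi (k + 1) hk) (hAi k hkr.le)]
        congr 1
        ext ω
        rw [mul_sub]
        congr 1
        · rw [Finset.sum_range_succ, mul_add, Complex.ofReal_add, add_mul, Complex.exp_add]
          ring
        · rw [mul_assoc, ← Complex.ofReal_mul, ← Real.exp_add, Finset.sum_range_succ]
          congr 3
          ring
      rw [hdiff]
      exact (norm_add_le _ _).trans (add_le_add ih hst)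
  refine (key r le_rfl).trans ?_
  rw [← Finset.mul_sum, Finset.sum_add_distrib, ← Finset.mul_sum, ← Finset.mul_sum]
  have hsum : ∑ j ∈ Finset.range r, ∫ ω, Z j ω ^ 2 ∂P ≤ C := by
    have hwi : ∀ j ∈ Finset.range r, Integrable (w j) P := fun j hj =>
      integrable_condExp.congr (hw j (Finset.mem_range.1 hj))
    calc ∑ j ∈ Finset.range r, ∫ ω, Z j ω ^ 2 ∂P = ∑ j ∈ Finset.range r, ∫ ω, w j ω ∂P := by
          refine Finset.sum_congr rfl fun j hj => ?_
          rw [← integral_condExp (hle j)]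
          exact integral_congr_ae (hw j (Finset.mem_range.1 hj))
      _ = ∫ ω, ∑ j ∈ Finset.range r, w j ω ∂P := (integral_finsetSum _ hwi).symm
      _ ≤ ∫ ω, C ∂P := integral_mono (integrable_finsetSum _ hwi) (integrable_const _) hwC
      _ = C := by simp
  gcongr

lemma exp_lip (x y M : ℝ) (hx : Real.exp x ≤ M) (hy : Real.exp y ≤ M) :
    |Real.exp x - Real.exp y| ≤ M * |x - y| := by
  wlog h : x ≤ y generalizing x y
  · rw [abs_sub_comm, abs_sub_comm x]
    exact this y x hy hx (by linarith)
  have h1 : Real.exp x ≤ Real.exp y := Real.exp_le_exp.2 h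
  rw [abs_sub_comm, abs_sub_comm x, abs_of_nonneg (by linarith), abs_of_nonneg (by linarith)]
  have h2 : Real.exp x = Real.exp y * Real.exp (x - y) := by rw [← Real.exp_add]; ring_nf
  have h3 := Real.add_one_le_exp (x - y)
  have h4 := Real.exp_pos y
  have h5 := mul_le_mul_of_nonneg_left h3 h4.le
  have h6 := mul_le_mul_of_nonneg_right hy (sub_nonneg.2 h)
  nlinarith

lemma bound {Ω : Type*} {m0 : MeasurableSpace Ω} (P : Measure Ω)
    [IsProbabilityMeasure P] (r : ℕ) (Y v : ℕ → Ω → ℝ) (F : ℕ → MeasurableSpace Ω)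
    (hmono : Monotone F) (hle : ∀ j, F j ≤ m0)
    (hY : ∀ j < r, StronglyMeasurable[F (j + 1)] (Y j))
    (hY2 : ∀ j < r, Integrable (fun ω => Y j ω ^ 2) P)
    (hY0 : ∀ j < r, P[Y j | F j] =ᵐ[P] 0)
    (hvm : ∀ j, StronglyMeasurable[F j] (v j))
    (hv : ∀ j < r, P[fun ω => Y j ω ^ 2 | F j] =ᵐ[P] v j)
    (hv0 : ∀ j ω, 0 ≤ v j ω) (s C : ℝ) (hs : 0 ≤ s) (hC : C = s + 1)
    (t ε δ : ℝ) (hε : 0 < ε) (hδ0 : 0 < δ) (hδ1 : δ ≤ 1) :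
    ‖(Real.exp (t ^ 2 * s / 2) : ℝ) *
      ∫ ω, Complex.exp ((t * ∑ j ∈ Finset.range r, Y j ω : ℝ) * Complex.I) ∂P - 1‖
      ≤ Real.exp (t ^ 2 * C / 2) * (t ^ 2 * δ +
          2 * P.real {ω | δ ≤ |∑ j ∈ Finset.range r, v j ω - s|} ) +
        Real.exp (t ^ 2 * C / 2) * ((ε * |t| ^ 3 + t ^ 4 * ε ^ 2) * C + (2 * t ^ 2 + t ^ 4 * C) *
        ∑ j ∈ Finset.range r,
          ∫ ω, Set.indicator {ω' | ε ≤ |Y j ω'|} (fun ω' => Y j ω' ^ 2) ω ∂P) := by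
  classical
  let c : ℕ → Ω → ℝ := fun j ω => if ∑ i ∈ Finset.range (j + 1), v i ω ≤ C then 1 else 0
  let Z : ℕ → Ω → ℝ := fun j ω => c j ω * Y j ω
  let w : ℕ → Ω → ℝ := fun j ω => c j ω * v j ω
  have hC0 : 0 ≤ C := by linarith
  have hc : ∀ j ω, c j ω = 0 ∨ c j ω = 1 := by
    intro j ω; simp only [c]; split_ifs <;> simp
  have hcm : ∀ j, StronglyMeasurable[F j] (c j) := by
    intro j
    have h2 : Measurable[F j] (fun ω => ∑ i ∈ Finset.range (j + 1), v i ω) := by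
      refine @Finset.measurable_fun_sum _ _ _ _ _ _ (F j) _ _ ?_
      intro i hi
      rw [Finset.mem_range] at hi
      exact ((hvm i).mono (hmono (by omega))).measurable
    have h3 : Measurable (fun x : ℝ => if x ≤ C then (1 : ℝ) else 0) :=
      Measurable.ite measurableSet_Iic measurable_const measurable_const
    exact (h3.comp h2).stronglyMeasurable
  have hcb : ∀ j, ∀ᵐ ω ∂P, ‖c j ω‖ ≤ 1 := fun j => ae_of_all _ fun ω => by
    rcases hc j ω with h | h <;> simp [h]
  have hYi : ∀ j < r, Integrable (Y j) P := fun j hj =>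
    ((memLp_two_iff_integrable_sq ((hY j hj).mono (hle _)).aestronglyMeasurable).2
      (hY2 j hj)).integrable (by norm_num)
  have hZsq : ∀ j, (fun ω => Z j ω ^ 2) = c j * (fun ω => Y j ω ^ 2) := by
    intro j; ext ω; simp only [Z, Pi.mul_apply]
    rcases hc j ω with h | h <;> simp [h]
  have hZm : ∀ j < r, StronglyMeasurable[F (j + 1)] (Z j) := fun j hj =>
    ((hcm j).mono (hmono (by omega))).mul (hY j hj)
  have hZ2 : ∀ j < r, Integrable (fun ω => Z j ω ^ 2) P := by
    intro j hj
    rw [hZsq]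
    exact (hY2 j hj).bdd_mul ((hcm j).mono (hle j)).aestronglyMeasurable (hcb j)
  have hZ0 : ∀ j < r, P[Z j | F j] =ᵐ[P] 0 := by
    intro j hj
    have h := condExp_stronglyMeasurable_mul_of_bound (hle j) (hcm j) (hYi j hj) 1 (hcb j)
    refine EventuallyEq.trans h ?_
    filter_upwards [hY0 j hj] with ω hω
    simp [hω]
  have hw : ∀ j < r, P[fun ω => Z j ω ^ 2 | F j] =ᵐ[P] w j := by
    intro j hj
    rw [hZsq]
    have h := condExp_stronglyMeasurable_mul_of_bound (hle j) (hcm j) (hY2 j hj) 1 (hcb j)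
    refine EventuallyEq.trans h ?_
    filter_upwards [hv j hj] with ω hω
    simp [hω, w]
  have hw0 : ∀ j ω, 0 ≤ w j ω := by
    intro j ω
    have := hv0 j ω
    rcases hc j ω with h | h <;> simp [w, h, this]
  have hwv : ∀ j ω, w j ω ≤ v j ω := by
    intro j ω
    have := hv0 j ω
    rcases hc j ω with h | h <;> simp [w, h, this]
  have hwC : ∀ k ω, ∑ j ∈ Finset.range k, w j ω ≤ C := by
    intro k ω
    induction k with
    | zero => simpa using hC0
    | succ k ih =>
      by_cases h : ∑ i ∈ Finset.range (k + 1), v i ω ≤ C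
      · exact (Finset.sum_le_sum fun j _ => hwv j ω).trans h
      · rw [Finset.sum_range_succ]
        have : w k ω = 0 := by simp only [w, c, if_neg h, zero_mul]
        rw [this, add_zero]; exact ih
  have htel := telescope P r Z w F hmono hle hZm hZ2 hZ0
    (fun j _ => (hcm j).mul (hvm j)) hw C hw0 (hwC r) t ε hε
  have hYJ : ∀ j < r, MeasurableSet {ω' | ε ≤ |Y j ω'|} := fun j hj =>
    measurableSet_le measurable_const ((hY j hj).mono (hle _)).measurable.abs
  have hZJ : ∀ j < r, MeasurableSet {ω' | ε ≤ |Z j ω'|} := fun j hj =>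
    measurableSet_le measurable_const ((hZm j hj).mono (hle _)).measurable.abs
  have hL : ∑ j ∈ Finset.range r,
          ∫ ω, Set.indicator {ω' | ε ≤ |Z j ω'|} (fun ω' => Z j ω' ^ 2) ω ∂P ≤
      ∑ j ∈ Finset.range r,
          ∫ ω, Set.indicator {ω' | ε ≤ |Y j ω'|} (fun ω' => Y j ω' ^ 2) ω ∂P := by
    refine Finset.sum_le_sum fun j hj => ?_
    have hj := Finset.mem_range.1 hj
    refine integral_mono ((hZ2 j hj).indicator (hZJ j hj)) ((hY2 j hj).indicator (hYJ j hj)) ?_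
    intro ω
    rcases hc j ω with h | h
    · have : Z j ω = 0 := by simp [Z, h]
      simp only [Set.indicator, Set.mem_ofPred_eq, this]
      split_ifs <;> simp <;> positivity
    · have : Z j ω = Y j ω := by simp [Z, h]
      simp only [Set.indicator, Set.mem_ofPred_eq, this]
      exact le_rfl
  set M := Real.exp (t ^ 2 * C / 2) with hM
  have hM0 : 0 < M := Real.exp_pos _
  have hdist : ‖(Real.exp (t ^ 2 * s / 2) : ℝ) *
      ∫ ω, Complex.exp ((t * ∑ j ∈ Finset.range r, Y j ω : ℝ) * Complex.I) ∂P -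
      ∫ ω, Complex.exp ((t * ∑ j ∈ Finset.range r, Z j ω : ℝ) * Complex.I) *
        (Real.exp (t ^ 2 * (∑ j ∈ Finset.range r, w j ω) / 2) : ℝ) ∂P‖ ≤
      M * (t ^ 2 * δ + 2 * P.real {ω | δ ≤ |∑ j ∈ Finset.range r, v j ω - s|}) := by
    have hVm : Measurable (fun ω => ∑ j ∈ Finset.range r, v j ω) :=
      Finset.measurable_fun_sum _ fun j _ => ((hvm j).mono (hle _)).measurable
    have hWm : Measurable (fun ω => ∑ j ∈ Finset.range r, w j ω) :=
      Finset.measurable_fun_sum _ fun j _ =>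
        (((hcm j).mul (hvm j)).mono (hle _)).measurable
    have hSm : Measurable (fun ω => ∑ j ∈ Finset.range r, Y j ω) :=
      Finset.measurable_fun_sum _ fun j hj =>
        ((hY j (Finset.mem_range.1 hj)).mono (hle _)).measurable
    have hTm : Measurable (fun ω => ∑ j ∈ Finset.range r, Z j ω) :=
      Finset.measurable_fun_sum _ fun j hj =>
        ((hZm j (Finset.mem_range.1 hj)).mono (hle _)).measurable
    set B := {ω | δ ≤ |∑ j ∈ Finset.range r, v j ω - s|} with hB
    have hBm : MeasurableSet B := measurableSet_le measurable_const (by fun_prop)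
    have hexpM : ∀ x ≤ C, Real.exp (t ^ 2 * x / 2) ≤ M := by
      intro x hx
      rw [hM, Real.exp_le_exp]
      have := mul_le_mul_of_nonneg_left hx (sq_nonneg t)
      linarith
    have hi1 : Integrable (fun ω => ((Real.exp (t ^ 2 * s / 2) : ℝ) : ℂ) *
      Complex.exp ((t * ∑ j ∈ Finset.range r, Y j ω : ℝ) * Complex.I)) P := by
      refine Integrable.of_bound (Measurable.aestronglyMeasurable (by fun_prop)) M
        (ae_of_all _ fun ω => ?_)
      rw [norm_mul, Complex.norm_exp_ofReal_mul_I, Complex.norm_real, Real.norm_eq_abs,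
        Real.abs_exp, mul_one]
      exact hexpM _ (by linarith)
    have hi2 : Integrable (fun ω =>
        Complex.exp ((t * ∑ j ∈ Finset.range r, Z j ω : ℝ) * Complex.I) *
        ((Real.exp (t ^ 2 * (∑ j ∈ Finset.range r, w j ω) / 2) : ℝ) : ℂ)) P := by
      refine Integrable.of_bound (Measurable.aestronglyMeasurable (by fun_prop)) M
        (ae_of_all _ fun ω => ?_)
      rw [norm_mul, Complex.norm_exp_ofReal_mul_I, Complex.norm_real, Real.norm_eq_abs,
        Real.abs_exp, one_mul]
      exact hexpM _ (hwC r ω)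
    rw [← integral_const_mul, ← integral_sub hi1 hi2]
    have hBi : Integrable (B.indicator (fun _ => (1 : ℝ))) P := (integrable_const _).indicator hBm
    have hbi : Integrable (fun ω => M * (t ^ 2 * δ) + (2 * M) * B.indicator (fun _ => (1 : ℝ)) ω) P :=
      (integrable_const _).add (hBi.const_mul _)
    have hbe : M * (t ^ 2 * δ + 2 * P.real B) =
        ∫ ω, (M * (t ^ 2 * δ) + (2 * M) * B.indicator (fun _ => (1 : ℝ)) ω) ∂P := by
      rw [integral_add (integrable_const _) (hBi.const_mul _), integral_const_mul (2 * M),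
        integral_indicator_const _ hBm]
      simp
      ring
    rw [hbe]
    refine norm_integral_le_of_norm_le hbi (ae_of_all _ fun ω => ?_)
    by_cases hω : ω ∈ B
    · rw [Set.indicator_of_mem hω]
      refine (norm_sub_le _ _).trans ?_
      rw [norm_mul, norm_mul, Complex.norm_exp_ofReal_mul_I, Complex.norm_exp_ofReal_mul_I,
        Complex.norm_real, Complex.norm_real, Real.norm_eq_abs, Real.norm_eq_abs,
        Real.abs_exp, Real.abs_exp]
      have h1 := hexpM s (by linarith)
      have h2 := hexpM _ (hwC r ω)
      have h3 : 0 ≤ M * (t ^ 2 * δ) := by positivity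
      linarith
    · rw [Set.indicator_of_notMem hω]
      have hω' : |∑ j ∈ Finset.range r, v j ω - s| < δ := not_le.1 hω
      have hVC : ∑ j ∈ Finset.range r, v j ω ≤ C := by
        have := (abs_lt.1 hω').2
        linarith
      have hc1 : ∀ j ∈ Finset.range r, c j ω = 1 := by
        intro j hj
        rw [Finset.mem_range] at hj
        have : ∑ i ∈ Finset.range (j + 1), v i ω ≤ C :=
          (Finset.sum_le_sum_of_subset_of_nonneg (Finset.range_mono hj)
            (fun i _ _ => hv0 i ω)).trans hVC
        simp only [c, if_pos this]
      have hZY : ∑ j ∈ Finset.range r, Z j ω = ∑ j ∈ Finset.range r, Y j ω :=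
        Finset.sum_congr rfl fun j hj => by simp [Z, hc1 j hj]
      have hwV : ∑ j ∈ Finset.range r, w j ω = ∑ j ∈ Finset.range r, v j ω :=
        Finset.sum_congr rfl fun j hj => by simp [w, hc1 j hj]
      rw [hZY, hwV, mul_comm, ← mul_sub, norm_mul, Complex.norm_exp_ofReal_mul_I, one_mul,
        ← Complex.ofReal_sub, Complex.norm_real, Real.norm_eq_abs]
      refine (exp_lip _ _ M (hexpM s (by linarith)) (hexpM _ hVC)).trans ?_
      rw [mul_zero, add_zero]
      refine mul_le_mul_of_nonneg_left ?_ hM0.le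
      rw [show t ^ 2 * s / 2 - t ^ 2 * (∑ j ∈ Finset.range r, v j ω) / 2
        = - (t ^ 2 / 2 * (∑ j ∈ Finset.range r, v j ω - s)) by ring, abs_neg, abs_mul,
        abs_of_nonneg (by positivity : 0 ≤ t ^ 2 / 2)]
      have := mul_le_mul_of_nonneg_left hω'.le (by positivity : 0 ≤ t ^ 2 / 2)
      have h3 : 0 ≤ t ^ 2 * δ := by positivity
      linarith
  calc _ = _ := rfl
    _ ≤ _ := norm_sub_le_norm_sub_add_norm_sub _ (∫ ω,
        Complex.exp ((t * ∑ j ∈ Finset.range r, Z j ω : ℝ) * Complex.I) *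
        (Real.exp (t ^ 2 * (∑ j ∈ Finset.range r, w j ω) / 2) : ℝ) ∂P) _
    _ ≤ _ := add_le_add hdist (htel.trans (by gcongr))

end MCLT

/-- Martingale central limit theorem (Billingsley): if for each `n`,
`Y n 0, …, Y n (r n - 1)` is a real martingale difference sequence with respect to the
increasing filtration `F n` (with `Y n j` being `F n (j+1)`-measurable and
`E[Y n j | F n j] = 0`), with finite second moments, such that
(i) the sum of the conditional variances converges in probability to a constant `σ² > 0`, and
(ii) the Lindeberg condition holds, then `∑_j Y n j` converges in distribution to `N(0, σ²)`,
i.e. integrals of bounded continuous functions converge to the Gaussian ones. -/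
theorem martingale_clt
    {Ω : Type*} [m0 : MeasurableSpace Ω] (P : Measure Ω) [IsProbabilityMeasure P]
    (r : ℕ → ℕ) (Y : ℕ → ℕ → Ω → ℝ) (F : ℕ → ℕ → MeasurableSpace Ω)
    (σ2 : ℝ≥0) (hσ2 : 0 < σ2)
    (hmono : ∀ n, Monotone (F n)) (hle : ∀ n j, F n j ≤ m0)
    (hmeas : ∀ n, ∀ j ∈ Finset.range (r n), StronglyMeasurable[F n (j + 1)] (Y n j))
    (hmds : ∀ n, ∀ j ∈ Finset.range (r n), P[Y n j | F n j] =ᵐ[P] 0)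
    (hL2 : ∀ n, ∀ j ∈ Finset.range (r n), Integrable (fun ω => (Y n j ω) ^ 2) P)
    (hvar : TendstoInMeasure P
        (fun n ω => ∑ j ∈ Finset.range (r n), (P[fun ω' => (Y n j ω') ^ 2 | F n j]) ω)
        atTop (fun _ => (σ2 : ℝ)))
    (hlindeberg : ∀ ε : ℝ, 0 < ε →
        Tendsto (fun n => ∑ j ∈ Finset.range (r n),
            ∫ ω, Set.indicator {ω' | ε ≤ |Y n j ω'|} (fun ω' => (Y n j ω') ^ 2) ω ∂P)
          atTop (𝓝 0)) :
    ∀ f : BoundedContinuousFunction ℝ ℝ,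
      Tendsto (fun n => ∫ ω, f (∑ j ∈ Finset.range (r n), Y n j ω) ∂P) atTop
        (𝓝 (∫ x, f x ∂(gaussianReal 0 σ2))) := by
  have hchar : ∀ t : ℝ, Tendsto (fun n => ∫ ω,
      Complex.exp ((t * ∑ j ∈ Finset.range (r n), Y n j ω : ℝ) * Complex.I) ∂P) atTop
      (𝓝 (Complex.exp (-(σ2 * t ^ 2 / 2)))) := by
    intro t
    let v : ℕ → ℕ → Ω → ℝ := fun n j ω => max ((P[fun ω' => (Y n j ω') ^ 2 | F n j]) ω) 0
    have hvm : ∀ n j, StronglyMeasurable[F n j] (v n j) := fun n j =>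
      (continuous_id.max continuous_const).comp_stronglyMeasurable
        (stronglyMeasurable_condExp (μ := P) (m := F n j) (f := fun ω' => (Y n j ω') ^ 2))
    have hv : ∀ n j, P[fun ω => Y n j ω ^ 2 | F n j] =ᵐ[P] v n j := by
      intro n j
      have : 0 ≤ᵐ[P] P[fun ω => Y n j ω ^ 2 | F n j] :=
        condExp_nonneg (ae_of_all _ fun ω => sq_nonneg _)
      filter_upwards [this] with ω hω
      exact (max_eq_left hω).symm
    have hv0 : ∀ n j ω, 0 ≤ v n j ω := fun n j ω => le_max_right _ _
    have hvar' : TendstoInMeasure P (fun n ω => ∑ j ∈ Finset.range (r n), v n j ω)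
        atTop (fun _ => (σ2 : ℝ)) := by
      refine hvar.congr_left fun n => ?_
      have : ∀ᵐ ω ∂P, ∀ j, (P[fun ω => Y n j ω ^ 2 | F n j]) ω = v n j ω :=
        ae_all_iff.2 (hv n)
      filter_upwards [this] with ω hω
      exact Finset.sum_congr rfl fun j _ => hω j
    rw [tendstoInMeasure_iff_measureReal_norm] at hvar'
    set C : ℝ := σ2 + 1 with hC
    set M := Real.exp (t ^ 2 * C / 2) with hM
    have hM0 : 0 < M := Real.exp_pos _
    have h1 : Tendsto (fun n => ((Real.exp (t ^ 2 * σ2 / 2) : ℝ) : ℂ) *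
      ∫ ω, Complex.exp ((t * ∑ j ∈ Finset.range (r n), Y n j ω : ℝ) * Complex.I) ∂P) atTop
      (𝓝 1) := by
      rw [Metric.tendsto_atTop']
      intro η hη
      have hcont : Tendsto (fun ε : ℝ => M * (t ^ 2 * ε) +
          M * ((ε * |t| ^ 3 + t ^ 4 * ε ^ 2) * C)) (𝓝[>] 0) (𝓝 0) := by
        have : Continuous (fun ε : ℝ => M * (t ^ 2 * ε) +
          M * ((ε * |t| ^ 3 + t ^ 4 * ε ^ 2) * C)) := by fun_prop
        have h := this.tendsto 0
        simp only [mul_zero, zero_mul, ne_eq, OfNat.ofNat_ne_zero, not_false_eq_true, zero_pow,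
          add_zero] at h
        exact h.mono_left nhdsWithin_le_nhds
      have hev1 := hcont.eventually (gt_mem_nhds (half_pos hη))
      have hev2 : ∀ᶠ ε : ℝ in 𝓝[>] 0, ε ≤ 1 :=
        nhdsWithin_le_nhds (Iic_mem_nhds one_pos)
      have hev3 : ∀ᶠ ε : ℝ in 𝓝[>] 0, 0 < ε := self_mem_nhdsWithin
      obtain ⟨ε, hε1, hε2, hε3⟩ := (hev1.and (hev2.and hev3)).exists
      have hlim : Tendsto (fun n => M * (2 * P.real {ω | ε ≤
          ‖∑ j ∈ Finset.range (r n), v n j ω - (σ2 : ℝ)‖}) + M * ((2 * t ^ 2 + t ^ 4 * C) *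
          ∑ j ∈ Finset.range (r n),
            ∫ ω, Set.indicator {ω' | ε ≤ |Y n j ω'|} (fun ω' => Y n j ω' ^ 2) ω ∂P))
          atTop (𝓝 0) := by
        have a := (((hvar' ε hε3).const_mul 2).const_mul M).add
          (((hlindeberg ε hε3).const_mul (2 * t ^ 2 + t ^ 4 * C)).const_mul M)
        simpa using a
      obtain ⟨N, hN⟩ := eventually_atTop.1 (hlim.eventually (gt_mem_nhds (half_pos hη)))
      refine ⟨N, fun n hn => ?_⟩
      have hb := MCLT.bound P (r n) (Y n) (v n) (F n) (hmono n) (hle n)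
        (fun j hj => hmeas n j (Finset.mem_range.2 hj))
        (fun j hj => hL2 n j (Finset.mem_range.2 hj))
        (fun j hj => hmds n j (Finset.mem_range.2 hj)) (hvm n) (fun j _ => hv n j) (hv0 n)
        σ2 C σ2.2 hC t ε ε hε3 hε3 hε2
      have hNn := hN n hn.le
      rw [dist_eq_norm]
      simp only [Real.norm_eq_abs] at hNn
      linarith
    have h2 := h1.const_mul (((Real.exp (-(t ^ 2 * σ2 / 2)) : ℝ) : ℂ))
    have e1 : ∀ z : ℂ, ((Real.exp (-(t ^ 2 * σ2 / 2)) : ℝ) : ℂ) *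
        (((Real.exp (t ^ 2 * σ2 / 2) : ℝ) : ℂ) * z) = z := by
      intro z
      rw [← mul_assoc, ← Complex.ofReal_mul, ← Real.exp_add]
      simp
    simp only [e1, mul_one] at h2
    convert h2 using 2
    push_cast
    congr 1
    ring
  intro f
  have hSm : ∀ n, Measurable (fun ω => ∑ j ∈ Finset.range (r n), Y n j ω) := fun n =>
    Finset.measurable_fun_sum _ fun j hj => ((hmeas n j hj).mono (hle _ _)).measurable
  let μ : ℕ → ProbabilityMeasure ℝ := fun n =>
    ⟨P.map (fun ω => ∑ j ∈ Finset.range (r n), Y n j ω),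
      Measure.isProbabilityMeasure_map (hSm n).aemeasurable⟩
  let μ₀ : ProbabilityMeasure ℝ := ⟨gaussianReal 0 σ2, inferInstance⟩
  have hμ : Tendsto μ atTop (𝓝 μ₀) := by
    rw [ProbabilityMeasure.tendsto_iff_tendsto_charFun]
    intro t
    have e0 : charFun (μ₀ : Measure ℝ) t = Complex.exp (-(σ2 * t ^ 2 / 2)) := by
      change charFun (gaussianReal 0 σ2) t = _
      rw [charFun_gaussianReal]
      simp
    rw [e0]
    refine (hchar t).congr fun n => ?_
    change _ = charFun (P.map (fun ω => ∑ j ∈ Finset.range (r n), Y n j ω)) t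
    rw [charFun_apply_real, integral_map (hSm n).aemeasurable
      (Measurable.aestronglyMeasurable (by fun_prop))]
    push_cast
    rfl
  have h := (ProbabilityMeasure.tendsto_iff_forall_integral_tendsto.1 hμ) f
  refine h.congr fun n => ?_
  change ∫ x, f x ∂(P.map (fun ω => ∑ j ∈ Finset.range (r n), Y n j ω)) = _
  exact integral_map (hSm n).aemeasurable f.continuous.measurable.aestronglyMeasurable
end
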